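/- arXiv:1502.00825 — 3 statements merged into one kernel-verified Lean document; each statement's English description precedes it below -/
import Mathlib

section
/- A linear functional L : ℝ[x₁,…,x_d] → ℝ is a moment functional, i.e. there exists a positive Borel measure μ on ℝ^d such that every polynomial is μ-integrable and L(p) = ∫_{ℝ^d} p(x) dμ(x) for all p ∈ ℝ[x₁,…,x_d], if and only if there exists a linear functional 𝓛 : A → ℝ with 𝓛(f²) ≥ 0 for all f ∈ A such that 𝓛(p|_X) = L(p) for every polynomial p, where p|_X ∈ A denotes the restriction of the polynomial function p to X = ℝ^d∖{0}. -/
noncomputable section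

/-- The punctured space `ℝ^d ∖ {0}`. -/
def Xsp (d : ℕ) : Type := {x : Fin d → ℝ // x ≠ 0}

/-- The restriction of the `j`-th coordinate function to `ℝ^d ∖ {0}`. -/
def coordFn {d : ℕ} (j : Fin d) : Xsp d → ℝ := fun x => x.1 j

/-- The function `f_kl(x) = x_k x_l / (x₁² + ⋯ + x_d²)` on `ℝ^d ∖ {0}`. -/
def fklFn {d : ℕ} (kk ll : Fin d) : Xsp d → ℝ :=
  fun x => x.1 kk * x.1 ll / ∑ i : Fin d, (x.1 i) ^ 2

/-- The algebra `A`: the subalgebra of real-valued functions on `ℝ^d ∖ {0}`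
generated by the coordinate functions and the functions `f_kl`. -/
def Aalg (d : ℕ) : Subalgebra ℝ (Xsp d → ℝ) :=
  Algebra.adjoin ℝ
    (Set.range (coordFn (d := d)) ∪
      Set.range (fun p : Fin d × Fin d => fklFn p.1 p.2))

/-- The coordinate function as an element of `A`. -/
def coordA {d : ℕ} (j : Fin d) : Aalg d :=
  ⟨coordFn j, Algebra.subset_adjoin (Set.mem_union_left _ ⟨j, rfl⟩)⟩

/-- The function `f_kl` as an element of `A`. -/
def fklA {d : ℕ} (kk ll : Fin d) : Aalg d :=
  ⟨fklFn kk ll, Algebra.subset_adjoin (Set.mem_union_right _ ⟨(kk, ll), rfl⟩)⟩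

/-- Restriction of a polynomial to `ℝ^d ∖ {0}`, as an element of `A`
(the polynomial expression in the coordinate functions). -/
def polyRes {d : ℕ} : MvPolynomial (Fin d) ℝ →ₐ[ℝ] Aalg d :=
  MvPolynomial.aeval coordA

instance (d : ℕ) : MeasurableSpace (Xsp d) := by unfold Xsp; infer_instance

end

/-!
Both conditions say that `L` is nonnegative on every nonnegative polynomial.

Let `𝓛` be a positive extension of `L`. The matrix `f = (f_kl)` is the projection onto the line
`ℝ x`. For `p ≥ 0` and a direction `θ ∈ ℝ^d`, the function `p(⟨x, θ⟩ θ / N) |f θ|^(2n)` of `x` is a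
nonnegative *univariate* polynomial in `⟨x, θ⟩` times a power of a sum of squares, hence a sum of
squares in `A`, and `𝓛` is nonnegative on it. The same holds for its mean over Gaussian `θ`. As
`n → ∞` the weight `|f θ|^(2n)` makes `θ` nearly parallel to `x` with `|θ|² ≈ N = 2n + 1`, so
`⟨x, θ⟩ θ / N` concentrates at `x`, and the normalised means converge to `p` inside a
finite-dimensional subspace of `A`; this gives `L p ≥ 0`. Haviland's theorem then provides the
measure.

Conversely, if `L` is nonnegative on nonnegative polynomials, it extends to a positive functional on
`A`: every function in `A` is dominated by a polynomial, and a polynomial that is nonnegative on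
`ℝ^d ∖ {0}` is nonnegative on `ℝ^d`.
-/

/-! ### Nonnegative univariate polynomials -/

theorem isSumSq_map {R S F : Type*} [Semiring R] [Semiring S] [FunLike F R S]
    [RingHomClass F R S] (φ : F) {a : R} (ha : IsSumSq a) : IsSumSq (φ a) := by
  induction ha with
  | zero => simp
  | sq_add b _ ih => simpa only [map_add, map_mul] using .sq_add _ ih

theorem map_nonneg_of_isSumSq {R : Type*} [CommRing R] [Algebra ℝ R] {F : R →ₗ[ℝ] ℝ}
    (hF : ∀ g, 0 ≤ F (g ^ 2)) {a : R} (ha : IsSumSq a) : 0 ≤ F a := by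
  induction ha with
  | zero => rw [map_zero]
  | sq_add b _ ih =>
    rw [map_add, ← sq]
    exact add_nonneg (hF b) ih

section

open Polynomial

theorem exists_forall_eval_le {p : ℝ[X]} (hp : ∀ x, 0 ≤ p.eval x) :
    ∃ a, ∀ x, p.eval a ≤ p.eval x := by
  rcases le_or_gt p.degree 0 with hdeg | hdeg
  · rw [eq_C_of_degree_le_zero hdeg]
    simp only [eval_C, le_refl, implies_true, exists_const]
  · have htop : Filter.Tendsto (fun x ↦ p.eval x) (Filter.cocompact ℝ) Filter.atTop :=
      (p.tendsto_norm_atTop hdeg tendsto_norm_cocompact_atTop).congr fun x ↦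
        Real.norm_of_nonneg (hp x)
    exact p.continuous.exists_forall_le htop

theorem exists_eq_C_add_sq_mul {p : ℝ[X]} {a : ℝ} (ha : ∀ x, p.eval a ≤ p.eval x) :
    ∃ q : ℝ[X], p = C (p.eval a) + (X - C a) ^ 2 * q := by
  obtain ⟨r, hr⟩ := (X_sub_C_dvd_sub_C_eval : X - C a ∣ p - C (p.eval a))
  have hmin : IsLocalMin (fun x ↦ p.eval x) a := .of_forall ha
  have hderiv : p.derivative.eval a = 0 := by simpa using hmin.deriv_eq_zero
  have hroot : r.eval a = 0 := by
    have := congrArg (fun q ↦ q.derivative.eval a) hr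
    simpa [hderiv, eq_comm] using this
  obtain ⟨q, rfl⟩ := dvd_iff_isRoot.mpr hroot
  exact ⟨q, by linear_combination hr⟩

theorem forall_eval_nonneg_of_sq_mul {q : ℝ[X]} {a : ℝ}
    (h : ∀ x, 0 ≤ ((X - C a) ^ 2 * q).eval x) (x : ℝ) : 0 ≤ q.eval x := by
  have hne : ∀ y ∈ ({a}ᶜ : Set ℝ), 0 ≤ q.eval y := fun y hy ↦ by
    have := h y
    simp only [eval_mul, eval_pow, eval_sub, eval_X, eval_C] at this
    exact nonneg_of_mul_nonneg_right this (by have := sub_ne_zero.mpr hy; positivity)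
  have hclosed : IsClosed {y | 0 ≤ q.eval y} := isClosed_le continuous_const q.continuous
  exact hclosed.closure_subset_iff.mpr hne ((dense_compl_singleton a) x)

theorem isSumSq_of_forall_eval_nonneg {p : ℝ[X]} (hp : ∀ x, 0 ≤ p.eval x) : IsSumSq p := by
  induction h : p.natDegree using Nat.strong_induction_on generalizing p with
  | _ n ih =>
    obtain ⟨a, ha⟩ := exists_forall_eval_le hp
    obtain ⟨q, hq⟩ := exists_eq_C_add_sq_mul ha
    have hC : IsSumSq (C (p.eval a)) := by
      rw [← Real.mul_self_sqrt (hp a), C_mul]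
      exact .mul_self _
    rw [hq]
    refine hC.add ?_
    rcases eq_or_ne q 0 with rfl | hq0
    · simp
    refine .mul (IsSquare.sq _).isSumSq (ih q.natDegree ?_ ?_ rfl)
    · have hdeg : p.natDegree = 2 + q.natDegree := by
        rw [hq, natDegree_C_add, ((monic_X_sub_C a).pow 2).natDegree_mul' hq0,
          (monic_X_sub_C a).natDegree_pow, natDegree_X_sub_C]
      lia
    · refine forall_eval_nonneg_of_sq_mul (a := a) fun x ↦ ?_
      rw [eq_sub_of_add_eq' hq.symm, eval_sub, eval_C]
      exact sub_nonneg.mpr (ha x)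

end

open MeasureTheory ProbabilityTheory MvPolynomial

/-! ### Gaussian means of polynomials -/

section

theorem integrable_pow_gaussianReal (k : ℕ) :
    Integrable (fun t : ℝ ↦ t ^ k) (gaussianReal 0 1) := by
  rcases k.eq_zero_or_pos with rfl | hk
  · simp only [pow_zero, integrable_const]
  · exact (memLp_id_gaussianReal k).integrable_norm_pow hk.ne' |>.mono'
      (by fun_prop) (.of_forall fun t ↦ by simp)

theorem integrable_pow_mul_gaussianPDFReal (k : ℕ) :
    Integrable (fun t : ℝ ↦ t ^ k * gaussianPDFReal 0 1 t) := by
  have h := integrable_pow_gaussianReal k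
  rw [gaussianReal_of_var_ne_zero _ one_ne_zero,
    integrable_withDensity_iff_integrable_smul' (measurable_gaussianPDF 0 1)
      (.of_forall fun _ ↦ gaussianPDF_lt_top)] at h
  simpa only [toReal_gaussianPDF, smul_eq_mul, mul_comm] using h

theorem hasDerivAt_gaussianPDFReal (t : ℝ) :
    HasDerivAt (gaussianPDFReal 0 1) (-t * gaussianPDFReal 0 1 t) t := by
  have hpdf : gaussianPDFReal 0 1 = fun t ↦ (√(2 * Real.pi))⁻¹ * Real.exp (-t ^ 2 / 2) := by
    ext; simp [gaussianPDFReal_def]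
  rw [hpdf]
  refine (((hasDerivAt_pow 2 t).fun_neg.div_const 2).exp.const_mul _).congr_deriv ?_
  push_cast
  ring

/-- The `k`-th moment of the standard Gaussian law. -/
noncomputable def gaussianMoment (k : ℕ) : ℝ := ∫ t, t ^ k ∂gaussianReal 0 1

theorem gaussianMoment_zero : gaussianMoment 0 = 1 := by
  simp only [gaussianMoment, pow_zero, integral_const, probReal_univ, one_smul]

theorem gaussianMoment_eq_integral (k : ℕ) :
    gaussianMoment k = ∫ t, t ^ k * gaussianPDFReal 0 1 t := by
  simp only [gaussianMoment, integral_gaussianReal_eq_integral_smul one_ne_zero, smul_eq_mul,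
    mul_comm]

theorem gaussianMoment_succ (k : ℕ) :
    gaussianMoment (k + 1) = k * gaussianMoment (k - 1) := by
  have hderiv (t : ℝ) : HasDerivAt (fun t ↦ t ^ k * gaussianPDFReal 0 1 t)
      (k * (t ^ (k - 1) * gaussianPDFReal 0 1 t) - t ^ (k + 1) * gaussianPDFReal 0 1 t) t :=
    ((hasDerivAt_pow k t).fun_mul (hasDerivAt_gaussianPDFReal t)).congr_deriv (by ring)
  have hlower := (integrable_pow_mul_gaussianPDFReal (k - 1)).const_mul (k : ℝ)
  have hupper := integrable_pow_mul_gaussianPDFReal (k + 1)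
  have h := integral_eq_zero_of_hasDerivAt_of_integrable hderiv (hlower.sub hupper)
    (integrable_pow_mul_gaussianPDFReal k)
  rw [integral_sub hlower hupper, integral_const_mul] at h
  rw [gaussianMoment_eq_integral, gaussianMoment_eq_integral]
  linarith

variable {ι R : Type*} [Fintype ι] [CommRing R] [Algebra ℝ R]

/-- The mean of a polynomial with coefficients in `R` in independent standard Gaussian variables. -/
noncomputable def gaussianMean : MvPolynomial ι R →ₗ[R] R :=
  (basisMonomials ι R).constr R fun α ↦ algebraMap ℝ R (∏ i, gaussianMoment (α i))

theorem gaussianMean_monomial (α : ι →₀ ℕ) (c : R) :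
    gaussianMean (monomial α c) = c * algebraMap ℝ R (∏ i, gaussianMoment (α i)) := by
  have : monomial α c = c • basisMonomials ι R α := by simp [smul_monomial]
  rw [this, map_smul, gaussianMean, Module.Basis.constr_basis, smul_eq_mul]

theorem gaussianMean_one : gaussianMean (1 : MvPolynomial ι R) = 1 := by
  rw [← C_1, C_apply, gaussianMean_monomial]
  simp [gaussianMoment_zero]

theorem gaussianMean_X_mul (j : ι) (P : MvPolynomial ι R) :
    gaussianMean (X j * P) = gaussianMean (pderiv j P) := by
  classical
  induction P using MvPolynomial.induction_on' with
  | add P Q hP hQ => rw [mul_add, map_add, map_add, map_add, hP, hQ]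
  | monomial α c =>
    have hprod (β : ι →₀ ℕ) (hβ : ∀ i ≠ j, β i = α i) :
        ∏ i, gaussianMoment (β i)
          = gaussianMoment (β j) * ∏ i ∈ Finset.univ.erase j, gaussianMoment (α i) := by
      rw [← Finset.mul_prod_erase _ _ (Finset.mem_univ j)]
      congr 1
      exact Finset.prod_congr rfl fun i hi ↦ by rw [hβ i (Finset.ne_of_mem_erase hi)]
    rw [X, monomial_mul, one_mul, pderiv_monomial, gaussianMean_monomial, gaussianMean_monomial,
      hprod _ fun i hi ↦ by simp [hi.symm], hprod (α - _) fun i hi ↦ by simp [hi.symm]]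
    simp only [Finsupp.add_apply, Finsupp.single_eq_same, Finsupp.tsub_apply, add_comm 1,
      gaussianMoment_succ]
    simp only [map_mul, map_natCast]
    ring

theorem map_gaussianMean_eq_integral (F : R →ₗ[ℝ] ℝ) (P : MvPolynomial ι R) :
    Integrable (fun θ : ι → ℝ ↦ F (eval (algebraMap ℝ R ∘ θ) P))
        (Measure.pi fun _ ↦ gaussianReal 0 1) ∧
      F (gaussianMean P) = ∫ θ : ι → ℝ, F (eval (algebraMap ℝ R ∘ θ) P)
        ∂Measure.pi fun _ ↦ gaussianReal 0 1 := by
  induction P using MvPolynomial.induction_on' with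
  | add P Q hP hQ =>
    simp only [map_add]
    exact ⟨hP.1.add hQ.1, by rw [hP.2, hQ.2, integral_add hP.1 hQ.1]⟩
  | monomial α c =>
    have heval (θ : ι → ℝ) :
        F (eval (algebraMap ℝ R ∘ θ) (monomial α c)) = F c * ∏ i, θ i ^ α i := by
      rw [eval_monomial, Finsupp.prod_fintype _ _ fun i ↦ pow_zero _]
      simp only [Function.comp_apply, ← map_pow, ← map_prod]
      rw [mul_comm, ← Algebra.smul_def, map_smul, smul_eq_mul, mul_comm]
    simp only [heval]
    refine ⟨.const_mul (.fintype_prod fun i ↦ integrable_pow_gaussianReal (α i)) _, ?_⟩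
    rw [integral_const_mul, integral_fintype_prod_eq_prod (fun i t ↦ t ^ α i),
      gaussianMean_monomial, mul_comm, ← Algebra.smul_def, map_smul, smul_eq_mul, mul_comm]
    rfl

theorem map_gaussianMean_nonneg {F : R →ₗ[ℝ] ℝ} {P : MvPolynomial ι R}
    (hP : ∀ θ : ι → ℝ, 0 ≤ F (eval (algebraMap ℝ R ∘ θ) P)) : 0 ≤ F (gaussianMean P) := by
  rw [(map_gaussianMean_eq_integral F P).2]
  exact integral_nonneg hP

end

/-! ### Orthogonal projections onto a line -/

section

variable {ι R : Type*} [Fintype ι] [CommRing R]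

/-- The linear form `∑ a_i X_i`. -/
noncomputable def linearForm (a : ι → R) : MvPolynomial ι R := ∑ i, C (a i) * X i

theorem pderiv_linearForm (a : ι → R) (j : ι) : pderiv j (linearForm a) = C (a j) := by
  classical
  simp [linearForm, pderiv_X, Pi.single_apply]

theorem linearForm_mul (a : ι → R) (P : MvPolynomial ι R) :
    linearForm a * P = ∑ j, X j * (C (a j) * P) := by
  simp only [linearForm, Finset.sum_mul, mul_assoc, mul_left_comm]

theorem C_mul_linearForm (c : R) (a : ι → R) : C c * linearForm a = linearForm (c • a) := by
  simp only [linearForm, Finset.mul_sum, Pi.smul_apply, smul_eq_mul, C_mul, mul_assoc]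

/-- The quadratic form `θ ↦ |f θ|²` attached to a matrix `f`. -/
noncomputable def normSqForm (f : Matrix ι ι R) : MvPolynomial ι R := ∑ j, linearForm (f j) ^ 2

theorem isSumSq_eval_normSqForm_pow (f : Matrix ι ι R) (θ : ι → R) (n : ℕ) :
    IsSumSq (eval θ (normSqForm f) ^ n) := by
  rw [normSqForm, map_sum]
  simp only [map_pow]
  exact Subsemiring.mem_sumSq.mp (pow_mem (Subsemiring.mem_sumSq.mpr (.sum_sq _ _)) n)

/-- `f` satisfies the identities of the orthogonal projection `x xᵀ / |x|²` onto the line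
spanned by `x`, stated without division. -/
structure IsLineProjection (x : ι → R) (f : Matrix ι ι R) : Prop where
  isSymm : f.IsSymm
  isIdempotentElem : IsIdempotentElem f
  trace_eq_one : f.trace = 1
  mul_comm_left (j k l : ι) : x k * f j l = x j * f k l
  vecMulVec_self : Matrix.vecMulVec x x = (x ⬝ᵥ x) • f

namespace IsLineProjection

variable {x : ι → R} {f : Matrix ι ι R} (h : IsLineProjection x f)
include h

theorem sum_mul_linearForm (j : ι) :
    ∑ k, C (f k j) * linearForm (f k) = linearForm (f j) := by
  have hidem (l : ι) : ∑ k, f k j * f k l = f j l := by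
    simp only [h.isSymm.apply j, ← Matrix.mul_apply, h.isIdempotentElem.eq]
  simp only [linearForm, Finset.mul_sum]
  rw [Finset.sum_comm]
  simp only [← mul_assoc, ← C_mul, ← Finset.sum_mul, ← map_sum, hidem]

theorem normSqForm_eq_sum : normSqForm f = ∑ j, X j * linearForm (f j) := by
  simp only [normSqForm, sq, linearForm_mul _ (linearForm _)]
  rw [Finset.sum_comm]
  simp only [← Finset.mul_sum, h.sum_mul_linearForm]

theorem pderiv_normSqForm (j : ι) : pderiv j (normSqForm f) = 2 * linearForm (f j) := by
  rw [← h.sum_mul_linearForm j, normSqForm, map_sum, Finset.mul_sum]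
  refine Finset.sum_congr rfl fun k _ ↦ ?_
  rw [pderiv_pow, pderiv_linearForm]
  push_cast
  ring

theorem linearForm_mul_linearForm_row (j : ι) :
    linearForm x * linearForm (f j) = C (x j) * normSqForm f := by
  have hrow (k : ι) : x k • f j = x j • f k := funext fun l ↦ h.mul_comm_left j k l
  rw [linearForm_mul, h.normSqForm_eq_sum, Finset.mul_sum]
  simp only [C_mul_linearForm, hrow, mul_left_comm (C _)]

theorem linearForm_sq : linearForm x ^ 2 = C (x ⬝ᵥ x) * normSqForm f := by
  have hrow (k : ι) : x k • x = (x ⬝ᵥ x) • f k := funext (congrFun₂ h.vecMulVec_self k)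
  rw [sq, linearForm_mul, h.normSqForm_eq_sum, Finset.mul_sum]
  simp only [C_mul_linearForm, hrow, mul_left_comm (C _)]

theorem sum_pderiv_linearForm_mul_normSqForm_pow (n : ℕ) :
    ∑ j, pderiv j (linearForm (f j) * normSqForm f ^ n) =
      ((2 * n + 1 : ℕ) : R) • normSqForm f ^ n := by
  have htrace : ∑ j, f j j = 1 := h.trace_eq_one
  have hpderiv (j : ι) : pderiv j (linearForm (f j) * normSqForm f ^ n) =
      C (f j j) * normSqForm f ^ n +
        linearForm (f j) ^ 2 * (2 * (n : MvPolynomial ι R) * normSqForm f ^ (n - 1)) := by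
    rw [pderiv_mul, pderiv_linearForm, pderiv_pow, h.pderiv_normSqForm]
    ring
  simp only [hpderiv, Finset.sum_add_distrib, ← Finset.sum_mul, ← map_sum, htrace]
  rw [← normSqForm, smul_eq_C_mul, map_natCast, C_1]
  rcases n with _ | n
  · simp
  · simp only [Nat.add_sub_cancel]
    push_cast
    ring

theorem pderiv_linearForm_pow_mul (j : ι) (m n : ℕ) :
    pderiv j (linearForm x ^ (m + 1) * normSqForm f ^ n) =
      C (((m + 1 + 2 * n : ℕ) : R) * x j) * (linearForm x ^ m * normSqForm f ^ n) := by
  rw [pderiv_mul, pderiv_pow, pderiv_pow, pderiv_linearForm, h.pderiv_normSqForm, C_mul,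
    map_natCast]
  rcases n with _ | n
  · simp only [Nat.add_sub_cancel, Nat.cast_add, Nat.cast_zero, mul_zero, add_zero]
    ring
  · simp only [Nat.add_sub_cancel]
    push_cast
    linear_combination 2 * (n + 1) * linearForm x ^ m * normSqForm f ^ n *
      h.linearForm_mul_linearForm_row j

end IsLineProjection

end

/-! ### Averaging over Gaussian directions -/

theorem eval_smul_of_isHomogeneous {σ S : Type*} [CommSemiring S] {q : MvPolynomial σ S} {m : ℕ}
    (hq : q.IsHomogeneous m) (c : S) (θ : σ → S) : eval (c • θ) q = c ^ m * eval θ q := by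
  rw [eval_eq, eval_eq, Finset.mul_sum]
  refine Finset.sum_congr rfl fun α hα ↦ ?_
  have hdeg : ∑ i ∈ α.support, α i = m := by
    simpa [Finsupp.weight_apply, Finsupp.sum] using hq (mem_support_iff.mp hα)
  simp only [Pi.smul_apply, smul_eq_mul, mul_pow, Finset.prod_mul_distrib,
    Finset.prod_pow_eq_pow_sum, hdeg]
  rw [mul_left_comm]

theorem isSumSq_sum_homogeneousComponent {σ R : Type*} [CommRing R] [Algebra ℝ R]
    {p : MvPolynomial σ ℝ} (hp : ∀ θ, 0 ≤ eval θ p) (θ : σ → ℝ) (c : ℝ) (u : R) :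
    IsSumSq (∑ m ∈ Finset.range (p.totalDegree + 1),
      algebraMap ℝ R (c ^ m * eval θ (homogeneousComponent m p)) * u ^ m) := by
  let r : Polynomial ℝ := ∑ m ∈ Finset.range (p.totalDegree + 1),
    Polynomial.C (c ^ m * eval θ (homogeneousComponent m p)) * Polynomial.X ^ m
  have hr (t : ℝ) : r.eval t = eval ((t * c) • θ) p := by
    conv_rhs => rw [← sum_homogeneousComponent p, map_sum]
    rw [Polynomial.eval_finsetSum]
    refine Finset.sum_congr rfl fun m _ ↦ ?_
    rw [eval_smul_of_isHomogeneous (homogeneousComponent_isHomogeneous m p)]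
    simp only [Polynomial.eval_mul, Polynomial.eval_C, Polynomial.eval_pow, Polynomial.eval_X]
    ring
  have hr_sumSq : IsSumSq r := isSumSq_of_forall_eval_nonneg fun t ↦ hr t ▸ hp _
  simpa [r] using isSumSq_map (Polynomial.aeval u) hr_sumSq

section

open Filter Topology
open scoped Nat

variable {ι R : Type*} [Fintype ι] [CommRing R] [Algebra ℝ R]

/-- The normalised mean over a Gaussian direction `θ` of `q(⟨x, θ⟩ θ / (2n + 1)) |f θ|^(2n)`,
for `q` homogeneous of degree `m`. The factor `(2n - 1)‼` is the mean of `|f θ|^(2n)` when `f` is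
the projection onto a line. -/
noncomputable def lineAverage (x : ι → R) (f : Matrix ι ι R) (n m : ℕ) :
    MvPolynomial ι ℝ →ₗ[ℝ] R :=
  (((2 * n - 1)‼ : ℝ) * (2 * n + 1) ^ m)⁻¹ •
    (gaussianMean.restrictScalars ℝ ∘ₗ
      LinearMap.mulRight ℝ (linearForm x ^ m * normSqForm f ^ n) ∘ₗ
        (mapAlgHom (Algebra.ofId ℝ R)).toLinearMap)

theorem lineAverage_apply (x : ι → R) (f : Matrix ι ι R) (n m : ℕ) (q : MvPolynomial ι ℝ) :
    lineAverage x f n m q = (((2 * n - 1)‼ : ℝ) * (2 * n + 1) ^ m)⁻¹ •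
      gaussianMean (map (algebraMap ℝ R) q * (linearForm x ^ m * normSqForm f ^ n)) :=
  rfl

theorem doubleFactorial_two_mul_succ_sub_one (n : ℕ) :
    (2 * (n + 1) - 1)‼ = (2 * n + 1) * (2 * n - 1)‼ :=
  Nat.doubleFactorial_add_one (2 * n)

namespace IsLineProjection

variable {x : ι → R} {f : Matrix ι ι R} (h : IsLineProjection x f)
include h

theorem gaussianMean_normSqForm_pow (n : ℕ) :
    gaussianMean (normSqForm f ^ n) = ((2 * n - 1)‼ : R) := by
  induction n with
  | zero => simp [gaussianMean_one]
  | succ n ih =>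
    have hsucc : normSqForm f ^ (n + 1) = ∑ j, X j * (linearForm (f j) * normSqForm f ^ n) := by
      simp only [← mul_assoc, ← Finset.sum_mul, ← h.normSqForm_eq_sum, pow_succ']
    rw [hsucc, map_sum]
    simp only [gaussianMean_X_mul]
    rw [← map_sum, h.sum_pderiv_linearForm_mul_normSqForm_pow, map_smul, ih, smul_eq_mul,
      doubleFactorial_two_mul_succ_sub_one, Nat.cast_mul]

theorem lineAverage_C (n : ℕ) (a : ℝ) : lineAverage x f n 0 (C a) = algebraMap ℝ R a := by
  have hne : ((2 * n - 1)‼ : ℝ) ≠ 0 := mod_cast (Nat.doubleFactorial_pos _).ne'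
  rw [lineAverage_apply, map_C, ← smul_eq_C_mul, map_smul, pow_zero, pow_zero, one_mul,
    h.gaussianMean_normSqForm_pow, mul_one, Algebra.smul_def, smul_eq_mul,
    ← map_natCast (algebraMap ℝ R), ← map_mul, ← map_mul]
  congr 1
  field_simp

theorem lineAverage_add_two (n m : ℕ) (q : MvPolynomial ι ℝ) :
    lineAverage x f n (m + 2) q =
      (((2 * n + 3) / (2 * n + 1) : ℝ) ^ m / (2 * n + 1)) •
        ((x ⬝ᵥ x) * lineAverage x f (n + 1) m q) := by
  have hne : ((2 * n - 1)‼ : ℝ) ≠ 0 := mod_cast (Nat.doubleFactorial_pos _).ne'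
  have hform : linearForm x ^ (m + 2) * normSqForm f ^ n =
      C (x ⬝ᵥ x) * (linearForm x ^ m * normSqForm f ^ (n + 1)) := by
    linear_combination linearForm x ^ m * normSqForm f ^ n * h.linearForm_sq
  rw [lineAverage_apply, lineAverage_apply, hform, mul_left_comm, ← smul_eq_C_mul, map_smul,
    mul_smul_comm, smul_smul, smul_eq_mul, doubleFactorial_two_mul_succ_sub_one]
  congr 1
  have hN : (2 * n + 1 : ℝ) ≠ 0 := by positivity
  push_cast
  rw [div_pow]
  field_simp
  ring

theorem lineAverage_X_mul (n m : ℕ) (j : ι) (q : MvPolynomial ι ℝ) :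
    lineAverage x f n (m + 1) (X j * q) =
      lineAverage x f n (m + 1) (pderiv j q) +
        ((m + 1 + 2 * n) / (2 * n + 1) : ℝ) • (x j * lineAverage x f n m q) := by
  simp only [lineAverage_apply, map_mul, map_X, mul_assoc, gaussianMean_X_mul]
  rw [pderiv_mul, pderiv_map, h.pderiv_linearForm_pow_mul, map_add, smul_add,
    mul_left_comm (map _ q), ← smul_eq_C_mul, map_smul]
  congr 1
  rw [mul_smul_comm, smul_smul, ← map_natCast (algebraMap ℝ R), smul_eq_mul, mul_assoc,
    ← Algebra.smul_def, smul_smul]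
  congr 1
  push_cast
  field_simp
  ring

theorem tendsto_lineAverage_add_two {F : R →ₗ[ℝ] ℝ} {m : ℕ} {q : MvPolynomial ι ℝ} {b : ℝ}
    (hb : Tendsto (fun n ↦ F ((x ⬝ᵥ x) * lineAverage x f n m q)) atTop (𝓝 b)) :
    Tendsto (fun n ↦ F (lineAverage x f n (m + 2) q)) atTop (𝓝 0) := by
  have hratio : Tendsto (fun n : ℕ ↦ ((2 * n + 3) / (2 * n + 1) : ℝ)) atTop (𝓝 (2 / 2)) := by
    simpa only [add_comm] using tendsto_add_mul_div_add_mul_atTop_nhds (3 : ℝ) 1 2 two_ne_zero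
  have hscale : Tendsto (fun n : ℕ ↦ (2 * n + 1 : ℝ)) atTop atTop :=
    tendsto_atTop_add_const_right _ _ (tendsto_natCast_atTop_atTop.const_mul_atTop two_pos)
  have hcoeff := (hratio.pow m).div_atTop hscale
  simp only [h.lineAverage_add_two, map_smul, smul_eq_mul]
  simpa only [zero_mul, Function.comp_def] using hcoeff.mul (hb.comp (tendsto_add_atTop_nat 1))

theorem tendsto_lineAverage_X_mul {F : R →ₗ[ℝ] ℝ} {m : ℕ} {q : MvPolynomial ι ℝ} {j : ι} {b : ℝ}
    (hpderiv : Tendsto (fun n ↦ F (lineAverage x f n (m + 1) (pderiv j q))) atTop (𝓝 0))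
    (hb : Tendsto (fun n ↦ F (x j * lineAverage x f n m q)) atTop (𝓝 b)) :
    Tendsto (fun n ↦ F (lineAverage x f n (m + 1) (X j * q))) atTop (𝓝 b) := by
  have hcoeff : Tendsto (fun n : ℕ ↦ ((m + 1 + 2 * n) / (2 * n + 1) : ℝ)) atTop (𝓝 (2 / 2)) := by
    simpa only [add_comm (1 : ℝ)] using
      tendsto_add_mul_div_add_mul_atTop_nhds (m + 1 : ℝ) 1 2 two_ne_zero
  simp only [h.lineAverage_X_mul, map_add, map_smul, smul_eq_mul]
  simpa only [div_self (two_ne_zero' ℝ), one_mul, zero_add] using hpderiv.add (hcoeff.mul hb)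

theorem tendsto_lineAverage (F : R →ₗ[ℝ] ℝ) {m : ℕ} {q : MvPolynomial ι ℝ}
    (hq : q.IsHomogeneous m) :
    Tendsto (fun n ↦ F (lineAverage x f n m q)) atTop (𝓝 (F (aeval x q))) := by
  induction m using Nat.strong_induction_on generalizing F q with
  | _ m ih =>
  rcases m with _ | m
  · obtain ⟨a, rfl⟩ : ∃ a, q = C a :=
      ⟨_, totalDegree_eq_zero_iff_eq_C.mp ((totalDegree_zero_iff_isHomogeneous _).mpr hq)⟩
    simp only [h.lineAverage_C, aeval_C, tendsto_const_nhds_iff]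
  have hX (j : ι) : Tendsto (fun n ↦ F (lineAverage x f n (m + 1) (X j * pderiv j q))) atTop
      (𝓝 (F (x j * aeval x (pderiv j q)))) := by
    have hj : (pderiv j q).IsHomogeneous m := hq.pderiv
    refine h.tendsto_lineAverage_X_mul ?_
      (ih m m.lt_succ_self (F ∘ₗ LinearMap.mulLeft ℝ (x j)) hj)
    rcases m with _ | m
    · rw [totalDegree_eq_zero_iff_eq_C.mp ((totalDegree_zero_iff_isHomogeneous _).mpr hj)]
      simp
    · exact h.tendsto_lineAverage_add_two
        (ih m (by lia) (F ∘ₗ LinearMap.mulLeft ℝ (x ⬝ᵥ x)) hj.pderiv)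
  have heuler : q = (m + 1 : ℝ)⁻¹ • ∑ j, X j * pderiv j q := by
    rw [hq.sum_X_mul_pderiv, ← Nat.cast_smul_eq_nsmul ℝ, smul_smul, Nat.cast_succ,
      inv_mul_cancel₀ (by positivity), one_smul]
  rw [heuler]
  simp only [map_smul, map_sum, map_mul, aeval_X]
  exact (tendsto_finsetSum _ fun j _ ↦ hX j).const_smul _

end IsLineProjection

theorem sum_lineAverage_homogeneousComponent (x : ι → R) (f : Matrix ι ι R) (n : ℕ)
    (p : MvPolynomial ι ℝ) :
    ∑ m ∈ Finset.range (p.totalDegree + 1), lineAverage x f n m (homogeneousComponent m p) =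
      ((2 * n - 1)‼ : ℝ)⁻¹ • gaussianMean ((∑ m ∈ Finset.range (p.totalDegree + 1),
        map (algebraMap ℝ R) (C ((2 * n + 1 : ℝ)⁻¹ ^ m) * homogeneousComponent m p) *
          linearForm x ^ m) * normSqForm f ^ n) := by
  rw [Finset.sum_mul, map_sum, Finset.smul_sum]
  refine Finset.sum_congr rfl fun m _ ↦ ?_
  rw [lineAverage_apply, map_mul (MvPolynomial.map _), map_C, mul_assoc, mul_assoc,
    ← smul_eq_C_mul, map_smul, algebraMap_smul, smul_smul, mul_inv, inv_pow]

theorem map_sum_lineAverage_nonneg {F : R →ₗ[ℝ] ℝ} (hF : ∀ g, 0 ≤ F (g ^ 2))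
    {p : MvPolynomial ι ℝ} (hp : ∀ θ, 0 ≤ eval θ p) (x : ι → R) (f : Matrix ι ι R) (n : ℕ) :
    0 ≤ F (∑ m ∈ Finset.range (p.totalDegree + 1),
      lineAverage x f n m (homogeneousComponent m p)) := by
  rw [sum_lineAverage_homogeneousComponent, map_smul, smul_eq_mul]
  refine mul_nonneg (by positivity) <| map_gaussianMean_nonneg fun θ ↦ ?_
  simp only [eval_mul, eval_sum, eval_pow, ← map_eval, eval_C]
  exact map_nonneg_of_isSumSq hF <|
    (isSumSq_sum_homogeneousComponent hp θ (2 * n + 1 : ℝ)⁻¹ _).mul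
      (isSumSq_eval_normSqForm_pow f _ n)

theorem IsLineProjection.map_aeval_nonneg {x : ι → R} {f : Matrix ι ι R}
    (h : IsLineProjection x f) {F : R →ₗ[ℝ] ℝ} (hF : ∀ g, 0 ≤ F (g ^ 2))
    {p : MvPolynomial ι ℝ} (hp : ∀ θ, 0 ≤ eval θ p) : 0 ≤ F (aeval x p) := by
  have hlim : Tendsto (fun n ↦ F (∑ m ∈ Finset.range (p.totalDegree + 1),
      lineAverage x f n m (homogeneousComponent m p))) atTop (𝓝 (F (aeval x p))) := by
    conv in aeval x p => rw [← sum_homogeneousComponent p]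
    simp only [map_sum]
    exact tendsto_finsetSum _ fun m _ ↦
      h.tendsto_lineAverage F (homogeneousComponent_isHomogeneous m p)
  exact ge_of_tendsto' hlim (map_sum_lineAverage_nonneg hF hp x f)

end

/-! ### Haviland's theorem -/

section

open Filter Topology

theorem exists_linearMap_extension_nonneg {V E : Type*} [AddCommGroup V] [Module ℝ V]
    [AddCommGroup E] [Module ℝ E] (T : V →ₗ[ℝ] E) (K : PointedCone ℝ E) (L : V →ₗ[ℝ] ℝ)
    (hL : ∀ v, T v ∈ K → 0 ≤ L v) (hK : ∀ y, ∃ v, T v + y ∈ K) :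
    ∃ G : E →ₗ[ℝ] ℝ, (∀ v, G (T v) = L v) ∧ ∀ y ∈ K, 0 ≤ G y := by
  have hker : L ∈ T.ker.dualAnnihilator := by
    refine (Submodule.mem_dualAnnihilator L).mpr fun v hv ↦ ?_
    have hTv : T v = 0 := hv
    have hneg := hL (-v) (by simp [hTv])
    rw [map_neg] at hneg
    exact le_antisymm (by linarith) (hL v (by simp [hTv]))
  rw [← LinearMap.range_dualMap_eq_dualAnnihilator_ker] at hker
  obtain ⟨φ, rfl⟩ := hker
  obtain ⟨G, hG, hpos⟩ := riesz_extension K ⟨T.range, φ.domRestrict T.range⟩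
    (by rintro ⟨_, v, rfl⟩ hv; exact hL v hv)
    (fun y ↦ (hK y).elim fun v hv ↦ ⟨⟨T v, v, rfl⟩, hv⟩)
  exact ⟨G, fun v ↦ hG ⟨T v, v, rfl⟩, hpos⟩

theorem integrable_of_tendsto_of_integral_le {α : Type*} [MeasurableSpace α] {μ : Measure α}
    {F : ℕ → α → ℝ} {f : α → ℝ} {c : ℝ} (hF : ∀ k, Integrable (F k) μ) (hF_nonneg : ∀ k, 0 ≤ F k)
    (hc : ∀ k, ∫ x, F k x ∂μ ≤ c) (hlim : ∀ x, Tendsto (F · x) atTop (𝓝 (f x))) :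
    Integrable f μ := by
  have hmeas := aestronglyMeasurable_of_tendsto_ae atTop
    (fun k ↦ (hF k).aestronglyMeasurable) (.of_forall hlim)
  have hbound (k : ℕ) : ∫⁻ x, ‖F k x‖ₑ ∂μ ≤ ENNReal.ofReal c := by
    rw [← ofReal_integral_norm_eq_lintegral_enorm (hF k)]
    simpa only [Real.norm_of_nonneg (hF_nonneg k _)] using ENNReal.ofReal_le_ofReal (hc k)
  refine ⟨hmeas, hasFiniteIntegral_iff_enorm.mpr ?_⟩
  calc ∫⁻ x, ‖f x‖ₑ ∂μ
    _ = ∫⁻ x, liminf (fun k ↦ ‖F k x‖ₑ) atTop ∂μ :=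
      lintegral_congr fun x ↦ (hlim x).enorm.liminf_eq.symm
    _ ≤ liminf (fun k ↦ ∫⁻ x, ‖F k x‖ₑ ∂μ) atTop :=
      lintegral_liminf_le' fun k ↦ (hF k).aestronglyMeasurable.aemeasurable.enorm
    _ ≤ ENNReal.ofReal c := liminf_le_of_le (by isBoundedDefault) fun b hb ↦
      (hb.exists.elim fun k hk ↦ hk.trans (hbound k))
    _ < ⊤ := ENNReal.ofReal_lt_top

variable {α σ : Type*}

/-- The algebra of functions on `α` dominated by a polynomial in the coordinate functions
`a ↦ u a i`. -/
def polynomiallyBounded (u : α → σ → ℝ) : Subalgebra ℝ (α → ℝ) where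
  carrier := {f | ∃ p : MvPolynomial σ ℝ, ∀ a, |f a| ≤ eval (u a) p}
  mul_mem' := by
    rintro f g ⟨p, hp⟩ ⟨q, hq⟩
    refine ⟨p * q, fun a ↦ ?_⟩
    rw [Pi.mul_apply, abs_mul, eval_mul]
    exact mul_le_mul (hp a) (hq a) (abs_nonneg _) ((abs_nonneg _).trans (hp a))
  add_mem' := by
    rintro f g ⟨p, hp⟩ ⟨q, hq⟩
    refine ⟨p + q, fun a ↦ ?_⟩
    rw [eval_add]
    exact (abs_add_le _ _).trans (add_le_add (hp a) (hq a))
  algebraMap_mem' r := ⟨C |r|, fun a ↦ by simp⟩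

variable (u : α → σ → ℝ)

theorem mem_polynomiallyBounded_of_abs_le {f : α → ℝ} {c : ℝ} (hf : ∀ a, |f a| ≤ c) :
    f ∈ polynomiallyBounded u :=
  ⟨C c, fun a ↦ by simpa using hf a⟩

theorem eval_mem_polynomiallyBounded (p : MvPolynomial σ ℝ) :
    (fun a ↦ eval (u a) p) ∈ polynomiallyBounded u := by
  refine ⟨1 + p ^ 2, fun a ↦ ?_⟩
  rw [eval_add, eval_pow, map_one, abs_le]
  constructor <;> nlinarith [sq_nonneg (eval (u a) p - 1), sq_nonneg (eval (u a) p + 1)]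

/-- The polynomial function `a ↦ p (u a)`, as a polynomially bounded function. -/
noncomputable def polynomialFunction : MvPolynomial σ ℝ →ₐ[ℝ] polynomiallyBounded u :=
  (AlgHom.pi fun a ↦ aeval (u a)).codRestrict _ (eval_mem_polynomiallyBounded u)

theorem polynomialFunction_apply (p : MvPolynomial σ ℝ) (a : α) :
    (polynomialFunction u p).1 a = eval (u a) p :=
  rfl

theorem exists_map_polynomialFunction_eq {L : MvPolynomial σ ℝ →ₗ[ℝ] ℝ}
    (hL : ∀ p, (∀ a, 0 ≤ eval (u a) p) → 0 ≤ L p) :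
    ∃ G : polynomiallyBounded u →ₚ[ℝ] ℝ, ∀ p, G (polynomialFunction u p) = L p := by
  let K : PointedCone ℝ (polynomiallyBounded u) :=
    (PointedCone.positive ℝ (α → ℝ)).comap (polynomiallyBounded u).val.toLinearMap
  obtain ⟨G, hG, hpos⟩ := exists_linearMap_extension_nonneg
    (polynomialFunction u).toLinearMap K L hL fun f ↦ by
      obtain ⟨p, hp⟩ := f.2
      exact ⟨p, fun a ↦ neg_le_iff_add_nonneg'.mp (neg_le_of_abs_le (hp a))⟩
  exact ⟨.mk₀ G hpos, hG⟩

end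

section

open Filter Topology CompactlySupported

variable {σ : Type*} [Fintype σ]

/-- The function `max 0 (1 - |x|² / (k + 1))`; these increase to `1` as `k → ∞`. -/
noncomputable def cutoff (k : ℕ) (x : σ → ℝ) : ℝ := max 0 (1 - (∑ i, x i ^ 2) / (k + 1))

theorem continuous_cutoff (k : ℕ) : Continuous (cutoff (σ := σ) k) := by
  unfold cutoff
  fun_prop

theorem cutoff_nonneg (k : ℕ) (x : σ → ℝ) : 0 ≤ cutoff k x := le_max_left _ _

theorem cutoff_le_one (k : ℕ) (x : σ → ℝ) : cutoff k x ≤ 1 :=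
  max_le zero_le_one (sub_le_self _ (by positivity))

theorem tendsto_cutoff (x : σ → ℝ) : Tendsto (cutoff · x) atTop (𝓝 1) := by
  have h : Tendsto (fun k : ℕ ↦ 1 - (∑ i, x i ^ 2) / (k + 1 : ℝ)) atTop (𝓝 (1 - 0)) :=
    (tendsto_const_nhds.div_atTop
      (tendsto_atTop_add_const_right _ _ tendsto_natCast_atTop_atTop)).const_sub 1
  simpa [cutoff] using tendsto_const_nhds (x := (0 : ℝ)) |>.max h

theorem hasCompactSupport_cutoff (k : ℕ) : HasCompactSupport (cutoff (σ := σ) k) := by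
  refine .intro (isCompact_closedBall 0 (k + 1)) fun x hx ↦ max_eq_left ?_
  have hk : (0 : ℝ) < k + 1 := by positivity
  obtain ⟨i, hi⟩ : ∃ i, (k + 1 : ℝ) < |x i| := by
    by_contra! hle
    exact hx (mem_closedBall_zero_iff.mpr ((pi_norm_le_iff_of_nonneg hk.le).mpr hle))
  rw [sub_nonpos, one_le_div hk]
  calc (k + 1 : ℝ)
    _ ≤ |x i| ^ 2 := by nlinarith [Nat.cast_nonneg (α := ℝ) k]
    _ = x i ^ 2 := sq_abs _
    _ ≤ ∑ j, x j ^ 2 :=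
      Finset.single_le_sum (fun j _ ↦ sq_nonneg (x j)) (Finset.mem_univ i)

/-- The truncation `f * cutoff k` of a continuous function. -/
noncomputable def truncate (f : C(σ → ℝ, ℝ)) (k : ℕ) : C_c(σ → ℝ, ℝ) where
  toFun x := f x * cutoff k x
  continuous_toFun := f.continuous.mul (continuous_cutoff k)
  hasCompactSupport' := (hasCompactSupport_cutoff k).mul_left

theorem truncate_nonneg {f : C(σ → ℝ, ℝ)} (hf : 0 ≤ f) (k : ℕ) (x : σ → ℝ) :
    0 ≤ truncate f k x :=
  mul_nonneg (hf x) (cutoff_nonneg k x)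

theorem truncate_le {f : C(σ → ℝ, ℝ)} (hf : 0 ≤ f) (k : ℕ) (x : σ → ℝ) :
    truncate f k x ≤ f x :=
  mul_le_of_le_one_right (hf x) (cutoff_le_one k x)

theorem sub_le_truncate {f : C(σ → ℝ, ℝ)} (hf : 0 ≤ f) (k : ℕ) (x : σ → ℝ) :
    f x - (k + 1 : ℝ)⁻¹ * ((∑ i, x i ^ 2) * f x) ≤ truncate f k x :=
  calc f x - (k + 1 : ℝ)⁻¹ * ((∑ i, x i ^ 2) * f x)
    _ = f x * (1 - (∑ i, x i ^ 2) / (k + 1)) := by ring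
    _ ≤ truncate f k x := mul_le_mul_of_nonneg_left (le_max_right _ _) (hf x)

theorem tendsto_truncate (f : C(σ → ℝ, ℝ)) (x : σ → ℝ) :
    Tendsto (truncate f · x) atTop (𝓝 (f x)) := by
  have h := (tendsto_cutoff x).const_mul (f x)
  rwa [mul_one] at h

/-- A compactly supported continuous function, viewed as a polynomially bounded function. -/
def compactlySupportedFunction : C_c(σ → ℝ, ℝ) →ₗ[ℝ] polynomiallyBounded (α := σ → ℝ) id where
  toFun f := ⟨f, (f.hasCompactSupport.exists_bound_of_continuous f.continuous).elim fun _ ↦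
    mem_polynomiallyBounded_of_abs_le _⟩
  map_add' _ _ := rfl
  map_smul' _ _ := rfl

theorem tendsto_map_truncate (G : polynomiallyBounded (α := σ → ℝ) id →ₚ[ℝ] ℝ) {f : C(σ → ℝ, ℝ)}
    (hf : 0 ≤ f) (hmem : ⇑f ∈ polynomiallyBounded (α := σ → ℝ) id) :
    Tendsto (fun k ↦ G (compactlySupportedFunction (truncate f k))) atTop (𝓝 (G ⟨f, hmem⟩)) := by
  let s : polynomiallyBounded (α := σ → ℝ) id := polynomialFunction id (∑ i, X i ^ 2)
  have hs (x : σ → ℝ) : s.1 x = ∑ i, x i ^ 2 := by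
    rw [polynomialFunction_apply, id]
    simp only [map_sum, map_pow, eval_X]
  have hlower (k : ℕ) : G ⟨f, hmem⟩ - (k + 1 : ℝ)⁻¹ * G (s * ⟨f, hmem⟩) ≤
      G (compactlySupportedFunction (truncate f k)) := by
    rw [← smul_eq_mul, ← map_smul, ← map_sub]
    refine OrderHomClass.mono G fun x ↦ ?_
    have := sub_le_truncate hf k x
    rwa [← hs] at this
  have hupper (k : ℕ) : G (compactlySupportedFunction (truncate f k)) ≤ G ⟨f, hmem⟩ :=
    OrderHomClass.mono G (truncate_le hf k)
  refine tendsto_of_tendsto_of_tendsto_of_le_of_le ?_ tendsto_const_nhds hlower hupper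
  have hinv : Tendsto (fun k : ℕ ↦ (k + 1 : ℝ)⁻¹) atTop (𝓝 0) :=
    (tendsto_atTop_add_const_right _ _ tendsto_natCast_atTop_atTop).inv_tendsto_atTop
  simpa only [zero_mul, sub_zero] using (hinv.mul_const _).const_sub (G ⟨f, hmem⟩)

variable (G : polynomiallyBounded (α := σ → ℝ) id →ₚ[ℝ] ℝ)

/-- The Riesz measure of the restriction of `G` to the compactly supported functions. -/
noncomputable def representingMeasure : Measure (σ → ℝ) :=
  RealRMK.rieszMeasure <|
    .mk₀ (G.toLinearMap ∘ₗ compactlySupportedFunction) fun _ hf ↦ map_nonneg G hf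

instance regular_representingMeasure : (representingMeasure G).Regular :=
  RealRMK.regular_rieszMeasure _

theorem integral_representingMeasure_of_hasCompactSupport (f : C_c(σ → ℝ, ℝ)) :
    ∫ x, f x ∂representingMeasure G = G (compactlySupportedFunction f) :=
  RealRMK.integral_rieszMeasure _ f

theorem integral_representingMeasure_of_nonneg {f : C(σ → ℝ, ℝ)} (hf : 0 ≤ f)
    (hmem : ⇑f ∈ polynomiallyBounded (α := σ → ℝ) id) :
    Integrable f (representingMeasure G) ∧ ∫ x, f x ∂representingMeasure G = G ⟨f, hmem⟩ := by
  have htrunc (k : ℕ) : Integrable (truncate f k) (representingMeasure G) :=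
    (truncate f k).continuous.integrable_of_hasCompactSupport (truncate f k).hasCompactSupport
  have hint : Integrable f (representingMeasure G) :=
    integrable_of_tendsto_of_integral_le htrunc (truncate_nonneg hf) (c := G ⟨f, hmem⟩)
      (fun k ↦ by
        rw [integral_representingMeasure_of_hasCompactSupport]
        exact OrderHomClass.mono G (truncate_le hf k))
      (tendsto_truncate f)
  refine ⟨hint, tendsto_nhds_unique ?_ (tendsto_map_truncate G hf hmem)⟩
  simp only [← integral_representingMeasure_of_hasCompactSupport]
  exact tendsto_integral_of_dominated_convergence f (fun k ↦ (htrunc k).aestronglyMeasurable) hint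
    (fun k ↦ .of_forall fun x ↦ by
      rw [Real.norm_of_nonneg (truncate_nonneg hf k x)]
      exact truncate_le hf k x)
    (.of_forall (tendsto_truncate f))

theorem integral_representingMeasure (f : C(σ → ℝ, ℝ))
    (hmem : ⇑f ∈ polynomiallyBounded (α := σ → ℝ) id) :
    Integrable f (representingMeasure G) ∧ ∫ x, f x ∂representingMeasure G = G ⟨f, hmem⟩ := by
  have habs : ⇑|f| ∈ polynomiallyBounded (α := σ → ℝ) id :=
    hmem.imp fun p hp x ↦ by simpa only [ContinuousMap.coe_abs, Pi.abs_apply, abs_abs] using hp x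
  obtain ⟨hint_abs, hG_abs⟩ := integral_representingMeasure_of_nonneg G (abs_nonneg f) habs
  obtain ⟨hint_sub, hG_sub⟩ := integral_representingMeasure_of_nonneg G
    (sub_nonneg.mpr (le_abs_self f)) (sub_mem habs hmem)
  have hf : ⇑f = ⇑|f| - ⇑(|f| - f) := by ext; simp
  have hGf : G ⟨f, hmem⟩ = G ⟨|f|, habs⟩ - G ⟨(|f| - f : C(σ → ℝ, ℝ)), sub_mem habs hmem⟩ := by
    rw [← map_sub]
    exact congrArg G (Subtype.ext hf)
  constructor
  · rw [hf]
    exact hint_abs.sub hint_sub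
  · rw [hGf]
    exact (integral_congr_ae (.of_forall (congrFun hf))).trans
      ((integral_sub hint_abs hint_sub).trans (congrArg₂ _ hG_abs hG_sub))

end

theorem exists_measure_of_forall_nonneg {σ : Type*} [Finite σ] {L : MvPolynomial σ ℝ →ₗ[ℝ] ℝ}
    (hL : ∀ p, (∀ x, 0 ≤ eval x p) → 0 ≤ L p) :
    ∃ μ : Measure (σ → ℝ), ∀ p, Integrable (fun x ↦ eval x p) μ ∧ L p = ∫ x, eval x p ∂μ := by
  have := Fintype.ofFinite σ
  obtain ⟨G, hG⟩ := exists_map_polynomialFunction_eq id hL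
  refine ⟨representingMeasure G, fun p ↦ ?_⟩
  obtain ⟨hint, hGp⟩ := integral_representingMeasure G
    ⟨fun x ↦ eval x p, continuous_eval p⟩ (eval_mem_polynomiallyBounded id p)
  exact ⟨hint, by rw [← hG]; exact hGp.symm⟩

/-! ### The extension of the polynomial algebra -/

section

open Topology

theorem forall_eval_nonneg_of_forall_ne_zero {σ : Type*} [Nonempty σ] {p : MvPolynomial σ ℝ}
    (hp : ∀ x ≠ 0, 0 ≤ eval x p) (x : σ → ℝ) : 0 ≤ eval x p := by
  have : (𝓝[≠] (0 : σ → ℝ)).NeBot := Module.punctured_nhds_neBot ℝ (σ → ℝ) 0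
  have hclosed : IsClosed {x | 0 ≤ eval x p} := isClosed_le continuous_const (continuous_eval p)
  exact hclosed.closure_subset_iff.mpr hp (dense_compl_singleton 0 x)

variable {d : ℕ}

theorem sum_sq_pos (x : Xsp d) : 0 < ∑ i, x.1 i ^ 2 := by
  obtain ⟨i, hi⟩ := Function.ne_iff.mp x.2
  exact Finset.sum_pos' (fun j _ ↦ sq_nonneg _) ⟨i, Finset.mem_univ i, sq_pos_of_ne_zero hi⟩

theorem isLineProjection_fklA : IsLineProjection (coordA (d := d)) (.of fklA) where
  isSymm := Matrix.IsSymm.ext fun k l ↦ Subtype.ext <| funext fun x ↦ by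
    simp only [Matrix.of_apply, fklA, fklFn, mul_comm]
  isIdempotentElem := Matrix.ext fun k l ↦ Subtype.ext <| funext fun x ↦ by
    have hx := (sum_sq_pos x).ne'
    simp only [Matrix.mul_apply, Matrix.of_apply, fklA, fklFn, AddSubmonoidClass.coe_finsetSum,
      Finset.sum_apply, MulMemClass.coe_mul, Pi.mul_apply]
    calc ∑ j, x.1 k * x.1 j / (∑ i, x.1 i ^ 2) * (x.1 j * x.1 l / ∑ i, x.1 i ^ 2)
      _ = (∑ j, x.1 j ^ 2) * (x.1 k * x.1 l / (∑ i, x.1 i ^ 2) ^ 2) := by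
        rw [Finset.sum_mul]
        exact Finset.sum_congr rfl fun j _ ↦ by field_simp
      _ = x.1 k * x.1 l / ∑ i, x.1 i ^ 2 := by field_simp
  trace_eq_one := Subtype.ext <| funext fun x ↦ by
    simp only [Matrix.trace, Matrix.diag_apply, Matrix.of_apply, fklA, fklFn,
      AddSubmonoidClass.coe_finsetSum, Finset.sum_apply, ← Finset.sum_div, ← sq]
    exact div_self (sum_sq_pos x).ne'
  mul_comm_left j k l := Subtype.ext <| funext fun x ↦ by
    change x.1 k * (x.1 j * x.1 l / _) = x.1 j * (x.1 k * x.1 l / _)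
    ring
  vecMulVec_self := Matrix.ext fun k l ↦ Subtype.ext <| funext fun x ↦ by
    have hx := (sum_sq_pos x).ne'
    simp only [Matrix.vecMulVec_apply, Matrix.smul_apply, dotProduct, Matrix.of_apply, coordA,
      coordFn, fklA, fklFn, smul_eq_mul, AddSubmonoidClass.coe_finsetSum, Finset.sum_apply,
      MulMemClass.coe_mul, Pi.mul_apply, ← sq, SubmonoidClass.coe_pow, Pi.pow_apply]
    field_simp

theorem abs_fklFn_le_one (k l : Fin d) (x : Xsp d) : |fklFn k l x| ≤ 1 := by
  have hle (i : Fin d) : x.1 i ^ 2 ≤ ∑ j, x.1 j ^ 2 :=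
    Finset.single_le_sum (fun j _ ↦ sq_nonneg (x.1 j)) (Finset.mem_univ i)
  rw [fklFn, abs_div, abs_of_pos (sum_sq_pos x), div_le_one (sum_sq_pos x), abs_le]
  constructor <;>
    nlinarith [hle k, hle l, sq_nonneg (x.1 k + x.1 l), sq_nonneg (x.1 k - x.1 l)]

theorem aalg_le_polynomiallyBounded :
    Aalg d ≤ polynomiallyBounded (fun (x : Xsp d) j ↦ coordFn j x) := by
  refine Algebra.adjoin_le ?_
  rintro _ (⟨j, rfl⟩ | ⟨⟨k, l⟩, rfl⟩)
  · have h := eval_mem_polynomiallyBounded (fun (x : Xsp d) j ↦ coordFn j x) (X j)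
    simp only [eval_X] at h
    exact h
  · exact mem_polynomiallyBounded_of_abs_le _ (abs_fklFn_le_one k l)

theorem inclusion_polyRes (p : MvPolynomial (Fin d) ℝ) :
    Subalgebra.inclusion aalg_le_polynomiallyBounded (polyRes p) = polynomialFunction _ p := by
  rw [← AlgHom.comp_apply]
  congr 1
  ext j x
  rw [AlgHom.comp_apply, polyRes, aeval_X, polynomialFunction_apply, eval_X]
  rfl

theorem exists_positive_extension [Nonempty (Fin d)] {L : MvPolynomial (Fin d) ℝ →ₗ[ℝ] ℝ}
    (hL : ∀ p, (∀ x, 0 ≤ eval x p) → 0 ≤ L p) :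
    ∃ 𝓛 : Aalg d →ₗ[ℝ] ℝ, (∀ g, 0 ≤ 𝓛 (g ^ 2)) ∧ ∀ p, 𝓛 (polyRes p) = L p := by
  obtain ⟨G, hG⟩ := exists_map_polynomialFunction_eq (fun (x : Xsp d) j ↦ coordFn j x) fun p hp ↦
    hL p (forall_eval_nonneg_of_forall_ne_zero fun x hx ↦ hp ⟨x, hx⟩)
  refine ⟨G.toLinearMap ∘ₗ (Subalgebra.inclusion aalg_le_polynomiallyBounded).toLinearMap,
    fun g ↦ map_nonneg G fun x ↦ sq_nonneg (g.1 x), fun p ↦ ?_⟩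
  rw [← hG, ← inclusion_polyRes]
  rfl

end

/-- **Theorem 4.3 (extension theorem).**  A linear functional `L` on
`ℝ[x₁,…,x_d]` is a moment functional (given by a positive Borel measure on
`ℝ^d`) if and only if it extends to a positive linear functional `𝓛` on the
algebra `A` of functions on `ℝ^d ∖ {0}` generated by the polynomials and the
bounded functions `f_kl(x) = x_k x_l / ‖x‖²`. -/
theorem moment_functional_iff_positive_extension (d : ℕ) (hd : 1 ≤ d)
    (L : MvPolynomial (Fin d) ℝ →ₗ[ℝ] ℝ) :
    (∃ μ : MeasureTheory.Measure (Fin d → ℝ),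
      ∀ p : MvPolynomial (Fin d) ℝ,
        MeasureTheory.Integrable (fun x : Fin d → ℝ => MvPolynomial.eval x p) μ ∧
        L p = ∫ x : Fin d → ℝ, MvPolynomial.eval x p ∂μ) ↔
    ∃ 𝓛 : Aalg d →ₗ[ℝ] ℝ, (∀ g : Aalg d, 0 ≤ 𝓛 (g ^ 2)) ∧
      ∀ p : MvPolynomial (Fin d) ℝ, 𝓛 (polyRes p) = L p := by
  have : Nonempty (Fin d) := ⟨⟨0, hd⟩⟩
  constructor
  · rintro ⟨μ, hμ⟩
    exact exists_positive_extension fun p hp ↦ (hμ p).2 ▸ integral_nonneg hp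
  · rintro ⟨𝓛, hsq, hext⟩
    refine exists_measure_of_forall_nonneg fun p hp ↦ ?_
    rw [← hext]
    exact isLineProjection_fklA.map_aeval_nonneg hsq hp
end

section
/- For every unital ℝ-algebra homomorphism χ : A → ℝ exactly one of the following holds: (1) there exists a unique x ∈ X such that χ(f) = f(x) for all f ∈ A; or (2) χ vanishes on all coordinate functions, i.e. χ(x ↦ x_j) = 0 for j = 1,…,d, and there exists t ∈ ℝ^d with t₁² + ⋯ + t_d² = 1 such that χ(f_kl) = t_k t_l for all k, l = 1,…,d. Conversely, for every x ∈ X the evaluation f ↦ f(x) is a unital ℝ-algebra homomorphism A → ℝ, and for every t ∈ ℝ^d with t₁² + ⋯ + t_d² = 1 there exists a unital ℝ-algebra homomorphism χ : A → ℝ with χ(x ↦ x_j) = 0 for all j and χ(f_kl) = t_k t_l for all k, l. -/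
/-!
The relations `f_ab f_kl = f_ak f_bl`, `∑ f_kk = 1` and `f_kl ∑ x_i² = x_k x_l` hold in `A`.
If a character `χ` does not kill every coordinate, the last relation forces `χ (f_kl)` to be the
value of `f_kl` at the point `(χ (x_j))_j`, so `χ` is the evaluation there. In every case the first
two relations make `(χ (f_kl))` a rank-one matrix of trace `1`, hence `t tᵀ` with `t` a unit vector.
Conversely `f_kl` is constant on rays, so evaluations at points tending to the origin along the ray
through `t` converge on the generators, and hence on all of `A`, to a character of the second kind.
-/

open Filter Topology

theorem sum_sq_eq_zero_iff {ι R : Type*} [Fintype ι] [Ring R] [LinearOrder R]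
    [IsStrictOrderedRing R] {v : ι → R} : ∑ i, v i ^ 2 = 0 ↔ v = 0 := by
  simpa only [dotProduct, ← pow_two] using dotProduct_self_eq_zero (v := v)

theorem exists_eq_vecMulVec_self_of_trace_pos {n : Type*} [Fintype n] {M : Matrix n n ℝ}
    (hM : ∀ a b k l, M a b * M k l = M a k * M b l) (htr : 0 < M.trace) :
    ∃ t : n → ℝ, M = Matrix.vecMulVec t t := by
  obtain ⟨m, -, hm⟩ : ∃ m ∈ Finset.univ, 0 < M m m :=
    Finset.exists_lt_of_sum_lt (by simpa [Matrix.trace] using htr)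
  refine ⟨fun k => M m k / √(M m m), Matrix.ext fun k l => ?_⟩
  rw [Matrix.vecMulVec_apply, div_mul_div_comm, Real.mul_self_sqrt hm.le, eq_div_iff hm.ne',
    mul_comm, hM]

section PointwiseLimit

variable {ι R A B : Type*} [CommSemiring R] [Semiring A] [Semiring B] [Algebra R A] [Algebra R B]
  [TopologicalSpace B] [IsTopologicalSemiring B] (φ : ι → A →ₐ[R] B) (l : Filter ι)

/-- The subalgebra of those `a` for which `φ i a` converges along `l`. -/
def convergenceSubalgebra : Subalgebra R A where
  carrier := {a | ∃ b, Tendsto (fun i => φ i a) l (𝓝 b)}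
  mul_mem' := fun ⟨b, hb⟩ ⟨c, hc⟩ => ⟨b * c, by simpa only [map_mul] using hb.mul hc⟩
  add_mem' := fun ⟨b, hb⟩ ⟨c, hc⟩ => ⟨b + c, by simpa only [map_add] using hb.add hc⟩
  algebraMap_mem' r := ⟨algebraMap R B r, by simp only [AlgHom.commutes, tendsto_const_nhds]⟩

variable {φ l}

/-- A pointwise limit of algebra homomorphisms, as an algebra homomorphism; the analogue of
`monoidHomOfTendsto`. -/
def algHomOfTendsto [T2Space B] [l.NeBot] (f : A → B)
    (h : Tendsto (fun i a => φ i a) l (𝓝 f)) : A →ₐ[R] B :=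
  { monoidHomOfTendsto f φ h, addMonoidHomOfTendsto f φ h with
    commutes' := fun r => tendsto_nhds_unique (tendsto_pi_nhds.1 h (algebraMap R A r)) <| by
      simp only [AlgHom.commutes, tendsto_const_nhds] }

theorem exists_algHom_tendsto_of_adjoin_eq_top [T2Space B] [l.NeBot] {s : Set A}
    (hs : Algebra.adjoin R s = ⊤) (h : ∀ a ∈ s, ∃ b, Tendsto (fun i => φ i a) l (𝓝 b)) :
    ∃ ψ : A →ₐ[R] B, ∀ a, Tendsto (fun i => φ i a) l (𝓝 (ψ a)) := by
  have hconv (a : A) : a ∈ convergenceSubalgebra φ l :=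
    Algebra.adjoin_le (S := convergenceSubalgebra φ l) h (hs ▸ Algebra.mem_top)
  choose f hf using hconv
  exact ⟨algHomOfTendsto f (tendsto_pi_nhds.2 hf), hf⟩

end PointwiseLimit

/-- The point of the punctured space given by a nonzero vector. -/
def Xsp.mk {d : ℕ} (v : Fin d → ℝ) (hv : v ≠ 0) : Xsp d := ⟨v, hv⟩

@[simp]
theorem Xsp.val_mk {d : ℕ} (v : Fin d → ℝ) (hv : v ≠ 0) : (Xsp.mk v hv).1 = v := rfl

namespace Aalg

variable {d : ℕ}

/-- Evaluation at a point of the punctured space, as a character of `A`. -/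
def eval (x : Xsp d) : Aalg d →ₐ[ℝ] ℝ :=
  (Pi.evalAlgHom ℝ (fun _ : Xsp d => ℝ) x).comp (Aalg d).val

@[simp]
theorem eval_coordA (x : Xsp d) (j : Fin d) : eval x (coordA j) = x.1 j := rfl

@[simp]
theorem eval_fklA (x : Xsp d) (k l : Fin d) :
    eval x (fklA k l) = x.1 k * x.1 l / ∑ i, x.1 i ^ 2 := rfl

theorem ext_of_eval {f g : Aalg d} (h : ∀ x, eval x f = eval x g) : f = g :=
  Subtype.ext (funext h)

theorem fklA_mul_fklA (a b k l : Fin d) : fklA a b * fklA k l = fklA a k * fklA b l :=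
  ext_of_eval fun x => by simp only [map_mul, eval_fklA]; ring

theorem sum_fklA_self : ∑ k : Fin d, fklA k k = 1 :=
  ext_of_eval fun x => by
    simp only [map_sum, map_one, eval_fklA, ← Finset.sum_div, ← pow_two]
    exact div_self (sum_sq_eq_zero_iff.not.2 x.2)

theorem fklA_mul_sum_coordA_sq (k l : Fin d) :
    fklA k l * ∑ i, coordA i ^ 2 = coordA k * coordA l :=
  ext_of_eval fun x => by
    simp only [map_mul, map_sum, map_pow, eval_fklA, eval_coordA]
    exact div_mul_cancel₀ _ (sum_sq_eq_zero_iff.not.2 x.2)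

theorem adjoin_coordA_fklA_eq_top :
    Algebra.adjoin ℝ (Set.range coordA ∪ Set.range fun p : Fin d × Fin d => fklA p.1 p.2) = ⊤ := by
  refine top_unique (Algebra.adjoin_adjoin_coe_preimage.ge.trans (Algebra.adjoin_mono ?_))
  rintro f (⟨j, hj⟩ | ⟨p, hp⟩)
  · exact Or.inl ⟨j, Subtype.ext hj⟩
  · exact Or.inr ⟨p, Subtype.ext hp⟩

theorem eq_eval_of_coordA_ne_zero (χ : Aalg d →ₐ[ℝ] ℝ) (h : (fun j => χ (coordA j)) ≠ 0) :
    χ = eval (Xsp.mk _ h) := by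
  refine AlgHom.ext_of_adjoin_eq_top adjoin_coordA_fklA_eq_top ?_
  rintro _ (⟨j, rfl⟩ | ⟨⟨k, l⟩, rfl⟩)
  · rfl
  · simp only [eval_fklA, Xsp.val_mk]
    rw [eq_div_iff (sum_sq_eq_zero_iff.not.2 h)]
    simpa only [map_mul, map_sum, map_pow] using congrArg χ (fklA_mul_sum_coordA_sq k l)

theorem existsUnique_eval_iff (χ : Aalg d →ₐ[ℝ] ℝ) :
    (∃! x : Xsp d, ∀ f : Aalg d, χ f = (f : Xsp d → ℝ) x) ↔ ¬ ∀ j, χ (coordA j) = 0 := by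
  constructor
  · rintro ⟨x, hx, -⟩ h
    exact x.2 (funext fun j => (hx (coordA j)).symm.trans (h j))
  · intro h
    have hne : (fun j => χ (coordA j)) ≠ 0 := fun h0 => h (congrFun h0)
    exact ⟨⟨_, hne⟩, DFunLike.congr_fun (eq_eval_of_coordA_ne_zero χ hne),
      fun y hy => Subtype.ext (funext fun j => (hy (coordA j)).symm)⟩

theorem exists_unit_vector_fklA (χ : Aalg d →ₐ[ℝ] ℝ) :
    ∃ t : Fin d → ℝ, ∑ i, t i ^ 2 = 1 ∧ ∀ k l, χ (fklA k l) = t k * t l := by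
  let M : Matrix (Fin d) (Fin d) ℝ := .of fun k l => χ (fklA k l)
  have htr : M.trace = 1 := by
    simpa only [map_sum, map_one] using! congrArg χ (sum_fklA_self (d := d))
  have hM (a b k l : Fin d) : M a b * M k l = M a k * M b l := by
    simpa only [map_mul] using! congrArg χ (fklA_mul_fklA a b k l)
  obtain ⟨t, ht⟩ := exists_eq_vecMulVec_self_of_trace_pos hM (htr ▸ one_pos)
  refine ⟨t, ?_, fun k l => congrFun₂ ht k l⟩
  rw [ht, Matrix.trace_vecMulVec] at htr
  simpa only [dotProduct, ← pow_two] using htr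

theorem eval_mk_smul_fklA {c : ℝ} (hc : c ≠ 0) {v : Fin d → ℝ} (hv : v ≠ 0) (k l : Fin d) :
    eval (Xsp.mk (c • v) (smul_ne_zero hc hv)) (fklA k l) = eval (Xsp.mk v hv) (fklA k l) := by
  simp only [eval_fklA, Xsp.val_mk, Pi.smul_apply, smul_eq_mul, mul_pow, ← Finset.mul_sum]
  rw [mul_mul_mul_comm, ← pow_two, mul_div_mul_left _ _ (pow_ne_zero 2 hc)]

theorem exists_algHom_coordA_zero_fklA_eval {v : Fin d → ℝ} (hv : v ≠ 0) :
    ∃ χ : Aalg d →ₐ[ℝ] ℝ, (∀ j, χ (coordA j) = 0) ∧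
      ∀ k l, χ (fklA k l) = eval (Xsp.mk v hv) (fklA k l) := by
  let φ (n : ℕ) : Aalg d →ₐ[ℝ] ℝ :=
    eval (Xsp.mk ((1 / ((n : ℝ) + 1)) • v) (smul_ne_zero (by positivity) hv))
  have hcoord (j : Fin d) : Tendsto (fun n => φ n (coordA j)) atTop (𝓝 0) := by
    simpa only [φ, eval_coordA, Xsp.val_mk, Pi.smul_apply, smul_eq_mul, zero_mul] using
      tendsto_one_div_add_atTop_nhds_zero_nat.mul_const (v j)
  have hfkl (k l : Fin d) :
      Tendsto (fun n => φ n (fklA k l)) atTop (𝓝 (eval (Xsp.mk v hv) (fklA k l))) :=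
    tendsto_const_nhds.congr fun n => (eval_mk_smul_fklA (by positivity) hv k l).symm
  obtain ⟨χ, hχ⟩ : ∃ χ : Aalg d →ₐ[ℝ] ℝ, ∀ f, Tendsto (fun n => φ n f) atTop (𝓝 (χ f)) := by
    refine exists_algHom_tendsto_of_adjoin_eq_top adjoin_coordA_fklA_eq_top ?_
    rintro _ (⟨j, rfl⟩ | ⟨⟨k, l⟩, rfl⟩)
    · exact ⟨0, hcoord j⟩
    · exact ⟨_, hfkl k l⟩
  exact ⟨χ, fun j => tendsto_nhds_unique (hχ _) (hcoord j),
    fun k l => tendsto_nhds_unique (hχ _) (hfkl k l)⟩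

end Aalg

/-- **Lemma 4.1 (characters of `A`).**  Every character (unital `ℝ`-algebra
homomorphism) of the algebra `A` of functions on `ℝ^d ∖ {0}` generated by the
coordinate functions and the functions `f_kl` is either the evaluation at a
unique point `x ∈ ℝ^d ∖ {0}`, or it kills all coordinate functions and sends
`f_kl` to `t_k t_l` for some unit vector `t`; and these two cases are mutually
exclusive.  Conversely, all these maps are indeed characters of `A`. -/
theorem characters_of_Aalg (d : ℕ) (hd : 1 ≤ d) :
    (∀ χ : Aalg d →ₐ[ℝ] ℝ,
      Xor'
        (∃! x : Xsp d, ∀ f : Aalg d, χ f = (f : Xsp d → ℝ) x)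
        ((∀ j : Fin d, χ (coordA j) = 0) ∧
          ∃ t : Fin d → ℝ, (∑ i : Fin d, (t i) ^ 2 = 1) ∧
            ∀ kk ll : Fin d, χ (fklA kk ll) = t kk * t ll)) ∧
    (∀ x : Xsp d, ∃ χ : Aalg d →ₐ[ℝ] ℝ, ∀ f : Aalg d, χ f = (f : Xsp d → ℝ) x) ∧
    (∀ t : Fin d → ℝ, (∑ i : Fin d, (t i) ^ 2 = 1) →
      ∃ χ : Aalg d →ₐ[ℝ] ℝ, (∀ j : Fin d, χ (coordA j) = 0) ∧
        ∀ kk ll : Fin d, χ (fklA kk ll) = t kk * t ll) := by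
  refine ⟨fun χ => ?_, fun x => ⟨Aalg.eval x, fun _ => rfl⟩, fun t ht => ?_⟩
  · rw [Aalg.existsUnique_eval_iff, and_iff_left (Aalg.exists_unit_vector_fklA χ)]
    exact xor_not_left.2 Iff.rfl
  · have ht0 : t ≠ 0 := fun h => one_ne_zero (ht.symm.trans (sum_sq_eq_zero_iff.2 h))
    obtain ⟨χ, hcoord, hfkl⟩ := Aalg.exists_algHom_coordA_zero_fklA_eval ht0
    refine ⟨χ, hcoord, fun k l => ?_⟩
    rw [hfkl, Aalg.eval_fklA, Xsp.val_mk, ht, div_one]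
end

section
/- Let s : ℕ × ℕ → ℂ. There exists a positive Borel measure μ on ℂ such that for all (m,n) ∈ ℕ × ℕ the function z ↦ z^m · conj(z)^n is μ-integrable and s(m,n) = ∫_ℂ z^m · conj(z)^n dμ(z), if and only if there exists a function ŝ : ℤ × ℤ → ℂ with ŝ(m,n) = s(m,n) for all (m,n) ∈ ℕ × ℕ which is positive semidefinite on N₊ := {(m,n) ∈ ℤ × ℤ : m + n ≥ 0}, i.e. for every r ∈ ℕ, all ξ₁,…,ξ_r ∈ N₊ and all c₁,…,c_r ∈ ℂ, the sum Σ_{i,j=1}^{r} c_i · conj(c_j) · ŝ(ξ_i* + ξ_j) is a nonnegative real number, where (m,n)* := (n,m) denotes the involution on ℤ × ℤ (note that ξ* + η ∈ N₊ whenever ξ, η ∈ N₊). -/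
/-!
Necessity is the Gram identity
`∑ c i * conj (c j) * ∫ conj (χ i) * χ j = ∫ |∑ conj (c i) * χ i| ^ 2`, applied to the characters of
`N₊` given by the points of the plane.

For sufficiency, let `ŝ` be positive semidefinite on `N₊`. Haviland's theorem, a consequence of the
M. Riesz extension theorem and the Riesz–Markov–Kakutani theorem, reduces the claim to
`0 ≤ Re ∑ a (m, n) * ŝ (m, n)` for every polynomial `∑ a (m, n) * z ^ m * conj z ^ n` whose real
part is nonnegative on the plane. In polar coordinates `z = t * w`, with `t` real and `|w| = 1`, the
monomial becomes `t ^ (m + n) * w ^ (m - n)`; extended by zero to the pairs `(m + n, m - n)` of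
unequal parity, `ŝ` becomes a positive semidefinite double sequence `M` on `ℕ × ℤ`. For fixed `w`
the Fejér sums `F r` of `k ↦ M r k` at `w` are a positive semidefinite Hankel sequence, so that the
functional `t ^ r ↦ F r` is nonnegative on the polynomials in `t` that are nonnegative on the line,
these being of the form `conj q * q`. Averaging over the roots of unity `w` and letting the order of
the Fejér sums tend to infinity recovers `M`.
-/

section NonnegPolynomial

open Polynomial

theorem eval_nonneg_of_mul_left {d p : ℝ[X]} (hd : d ≠ 0) (hd_nonneg : ∀ x, 0 ≤ d.eval x)
    (hdp : ∀ x, 0 ≤ (d * p).eval x) (x : ℝ) : 0 ≤ p.eval x := by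
  have hdense : Dense {x | d.IsRoot x}ᶜ := (finite_setOfPred_isRoot hd).countable.dense_compl ℝ
  have hclosed : IsClosed {x | 0 ≤ p.eval x} := isClosed_le continuous_const p.continuous
  refine hclosed.closure_subset_iff.mpr (fun y hy => ?_) (hdense x)
  have hy_pos : 0 < d.eval y := (hd_nonneg y).lt_of_ne' hy
  exact nonneg_of_mul_nonneg_right (by simpa only [eval_mul] using hdp y) hy_pos

theorem sq_X_sub_C_dvd_of_nonneg {p : ℝ[X]} (hp : ∀ x, 0 ≤ p.eval x) {a : ℝ} (ha : p.IsRoot a) :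
    (X - C a) ^ 2 ∣ p := by
  rcases eq_or_ne p 0 with rfl | hp0
  · exact dvd_zero _
  have hmin : IsLocalMin (fun x => p.eval x) a :=
    .of_forall fun x => ha.eq_zero.trans_le (hp x)
  have hderiv : p.derivative.IsRoot a := by
    rw [IsRoot, ← p.deriv]
    exact hmin.deriv_eq_zero
  exact (le_rootMultiplicity_iff hp0).mp ((one_lt_rootMultiplicity_iff_isRoot hp0).mpr ⟨ha, hderiv⟩)

/-- The monic real quadratic with the complex roots `z` and `conj z`. -/
noncomputable def conjQuadratic (z : ℂ) : ℝ[X] :=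
  X ^ 2 - C (2 * z.re) * X + C (‖z‖ ^ 2)

theorem conjQuadratic_natDegree (z : ℂ) : (conjQuadratic z).natDegree = 2 := by
  unfold conjQuadratic
  compute_degree!

theorem conjQuadratic_ne_zero (z : ℂ) : conjQuadratic z ≠ 0 :=
  ne_zero_of_natDegree_gt (n := 0) (by simp [conjQuadratic_natDegree])

theorem map_conjQuadratic (z : ℂ) :
    (conjQuadratic z).map (algebraMap ℝ ℂ) = (X - C (starRingEnd ℂ z)) * (X - C z) := by
  calc (conjQuadratic z).map (algebraMap ℝ ℂ)
      = X ^ 2 - C ((2 * z.re : ℝ) : ℂ) * X + C ((‖z‖ : ℂ) ^ 2) := by simp [conjQuadratic]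
    _ = (X - C (starRingEnd ℂ z)) * (X - C z) := by
      rw [← Complex.add_conj, ← Complex.mul_conj', C_add, C_mul]
      ring

theorem conjQuadratic_eval_nonneg (z : ℂ) (x : ℝ) : 0 ≤ (conjQuadratic z).eval x := by
  have hsq : (conjQuadratic z).eval x = (x - z.re) ^ 2 + z.im ^ 2 := by
    simp only [conjQuadratic, eval_add, eval_sub, eval_mul, eval_pow, eval_X, eval_C,
      Complex.sq_norm, Complex.normSq_apply]
    ring
  rw [hsq]
  positivity

theorem conjQuadratic_dvd_of_nonneg {p : ℝ[X]} (hp : ∀ x, 0 ≤ p.eval x) {z : ℂ}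
    (hz : aeval z p = 0) : conjQuadratic z ∣ p := by
  by_cases him : z.im = 0
  · obtain ⟨a, rfl⟩ : ∃ a : ℝ, (a : ℂ) = z := ⟨z.re, Complex.ext rfl him.symm⟩
    have ha : p.IsRoot a := by
      rw [← Complex.coe_algebraMap, aeval_algebraMap_apply] at hz
      simpa using hz
    have hquad : conjQuadratic (a : ℂ) = (X - C a) ^ 2 := by
      simp only [conjQuadratic, Complex.ofReal_re, Complex.norm_real, Real.norm_eq_abs, sq_abs,
        C_mul, C_pow, C_ofNat]
      ring
    exact hquad ▸ sq_X_sub_C_dvd_of_nonneg hp ha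
  · exact p.quadratic_dvd_of_aeval_eq_zero_im_ne_zero hz him

theorem exists_map_eq_conj_mul_self_of_nonneg {p : ℝ[X]} (hp : ∀ x, 0 ≤ p.eval x) :
    ∃ q : ℂ[X], p.map (algebraMap ℝ ℂ) = q.map (starRingEnd ℂ) * q := by
  induction hn : p.natDegree using Nat.strong_induction_on generalizing p with
  | _ n ih =>
  by_cases hdeg : p.degree ≤ 0
  · obtain ⟨c, rfl⟩ : ∃ c, p = C c := ⟨_, eq_C_of_degree_le_zero hdeg⟩
    have hc : 0 ≤ c := by simpa using hp 0
    refine ⟨C (√c : ℂ), ?_⟩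
    rw [map_C, map_C, ← C_mul, Complex.conj_ofReal, ← Complex.ofReal_mul, Real.mul_self_sqrt hc,
      Complex.coe_algebraMap]
  · obtain ⟨z, hz⟩ : ∃ z : ℂ, aeval z p = 0 :=
      IsAlgClosed.exists_aeval_eq_zero _ p fun h => hdeg h.le
    obtain ⟨p', rfl⟩ := conjQuadratic_dvd_of_nonneg hp hz
    have hp' : ∀ x, 0 ≤ p'.eval x :=
      eval_nonneg_of_mul_left (conjQuadratic_ne_zero z) (conjQuadratic_eval_nonneg z) hp
    have hlt : p'.natDegree < n := by
      have hp'_ne : p' ≠ 0 := by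
        rintro rfl
        simp at hdeg
      rw [← hn, natDegree_mul (conjQuadratic_ne_zero z) hp'_ne, conjQuadratic_natDegree]
      omega
    obtain ⟨q, hq⟩ := ih _ hlt hp' rfl
    refine ⟨(X - C z) * q, ?_⟩
    rw [Polynomial.map_mul, hq, map_conjQuadratic, Polynomial.map_mul, Polynomial.map_sub, map_X,
      map_C]
    ring

end NonnegPolynomial

section PosSemidefKernel

open Matrix
open scoped ComplexOrder

variable {n : Type*} {K : Matrix n n ℂ}

theorem sum_sum_mul_nonneg_of_posSemidef (hK : K.PosSemidef) {ι : Type*} [Fintype ι] (ξ : ι → n)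
    (c : ι → ℂ) : 0 ≤ ∑ i, ∑ j, c i * starRingEnd ℂ (c j) * K (ξ i) (ξ j) := by
  have h := (hK.submatrix ξ).dotProduct_mulVec_nonneg fun i => starRingEnd ℂ (c i)
  simp only [dotProduct, mulVec, Finset.mul_sum, submatrix_apply, Pi.star_apply,
    Complex.star_def, Complex.conj_conj] at h
  simpa only [mul_assoc, mul_comm (starRingEnd ℂ (c _))] using h

theorem posSemidef_of_sum_sum_mul_nonneg
    (hK : ∀ (r : ℕ) (ξ : Fin r → n) (c : Fin r → ℂ),
      0 ≤ ∑ i, ∑ j, c i * starRingEnd ℂ (c j) * K (ξ i) (ξ j)) :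
    K.PosSemidef := by
  have hdiag (x : n) : 0 ≤ K x x := by simpa using hK 1 ![x] ![1]
  have hdiag_im (x : n) : (K x x).im = 0 := (Complex.nonneg_iff.mp (hdiag x)).2.symm
  refine ⟨Matrix.ext fun x y => ?_, fun a => ?_⟩
  · have him : 0 = (K x y).im + (K y x).im := by
      simpa [Fin.sum_univ_two, hdiag_im] using
        (Complex.nonneg_iff.mp (hK 2 ![x, y] ![1, 1])).2
    have hre : 0 = -(K x y).re + (K y x).re := by
      simpa [Fin.sum_univ_two, hdiag_im] using
        (Complex.nonneg_iff.mp (hK 2 ![x, y] ![1, Complex.I])).2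
    rw [conjTranspose_apply, Complex.star_def]
    apply Complex.ext <;> simp only [Complex.conj_re, Complex.conj_im] <;> linarith
  · let e := a.support.equivFin.symm
    have hsum (f : n → ℂ) : ∑ x ∈ a.support, f x = ∑ i, f (e i) := by
      rw [← Finset.sum_coe_sort, e.sum_comp fun x : a.support => f x]
    have h := hK _ (fun i => (e i : n)) fun i => starRingEnd ℂ (a (e i))
    simp only [Finsupp.sum, hsum, Complex.star_def]
    simpa only [mul_right_comm, Complex.conj_conj] using h

end PosSemidefKernel

section Hamburger

open Polynomial
open scoped ComplexOrder

/-- The Hankel matrix of the sequence `m`. -/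
def hankelMatrix (m : ℕ → ℂ) : Matrix ℕ ℕ ℂ := .of fun i j => m (i + j)

/-- The functional on polynomials with the moments `X ^ k ↦ m k`. -/
noncomputable def rieszFunctional (m : ℕ → ℂ) : ℂ[X] →ₗ[ℂ] ℂ :=
  lsum fun k => LinearMap.toSpanSingleton ℂ ℂ (m k)

theorem rieszFunctional_monomial (m : ℕ → ℂ) (k : ℕ) (c : ℂ) :
    rieszFunctional m (monomial k c) = c * m k := by
  simp [rieszFunctional]

theorem rieszFunctional_conj_mul_self_nonneg {m : ℕ → ℂ} (hm : (hankelMatrix m).PosSemidef)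
    (q : ℂ[X]) : 0 ≤ rieszFunctional m (q.map (starRingEnd ℂ) * q) := by
  have hq : ∑ i : Fin (q.natDegree + 1), monomial (i : ℕ) (q.coeff i) = q := by
    rw [Fin.sum_univ_eq_sum_range fun i => monomial i (q.coeff i), ← q.as_sum_range]
  calc 0 ≤ ∑ i : Fin (q.natDegree + 1), ∑ j : Fin (q.natDegree + 1),
        starRingEnd ℂ (q.coeff i) * starRingEnd ℂ (starRingEnd ℂ (q.coeff j)) *
          hankelMatrix m i j :=
        sum_sum_mul_nonneg_of_posSemidef hm Fin.val fun i => starRingEnd ℂ (q.coeff i)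
    _ = rieszFunctional m (q.map (starRingEnd ℂ) * q) := by
        conv_rhs => rw [← hq]
        simp only [Polynomial.map_sum, map_monomial, Finset.sum_mul_sum, monomial_mul_monomial,
          map_sum, rieszFunctional_monomial, Complex.conj_conj, hankelMatrix, Matrix.of_apply]

theorem conj_eq_self_of_hankelMatrix_posSemidef {m : ℕ → ℂ} (hm : (hankelMatrix m).PosSemidef)
    (k : ℕ) : starRingEnd ℂ (m k) = m k := by
  simpa [hankelMatrix] using hm.isHermitian.apply k 0

theorem re_sum_mul_nonneg_of_hankelMatrix_posSemidef {m : ℕ → ℂ}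
    (hm : (hankelMatrix m).PosSemidef) {ι : Type*} {s : Finset ι} {a : ι → ℂ} {r : ι → ℕ}
    (ha : ∀ t : ℝ, 0 ≤ (∑ x ∈ s, a x * (t : ℂ) ^ r x).re) :
    0 ≤ (∑ x ∈ s, a x * m (r x)).re := by
  let p : ℝ[X] := ∑ x ∈ s, monomial (r x) (a x).re
  have hp (t : ℝ) : 0 ≤ p.eval t := by
    simpa [p, eval_finsetSum, ← Complex.ofReal_pow, Complex.re_mul_ofReal] using ha t
  have hre (x : ι) : ((a x).re * m (r x)).re = (a x * m (r x)).re := by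
    have him := Complex.conj_eq_iff_im.mp (conj_eq_self_of_hankelMatrix_posSemidef hm (r x))
    simp [him]
  obtain ⟨q, hq⟩ := exists_map_eq_conj_mul_self_of_nonneg hp
  calc 0 ≤ (rieszFunctional m (p.map (algebraMap ℝ ℂ))).re :=
        hq ▸ (Complex.nonneg_iff.mp (rieszFunctional_conj_mul_self_nonneg hm q)).1
    _ = (∑ x ∈ s, a x * m (r x)).re := by
        simp only [p, Polynomial.map_sum, map_monomial, map_sum, rieszFunctional_monomial,
          Complex.coe_algebraMap, Complex.re_sum, hre]

end Hamburger

section PolarKernel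

open Matrix
open scoped ComplexOrder

/-- The `*`-semigroup `N₊` of pairs of integers with nonnegative sum. -/
abbrev NPlus : Type := {ξ : ℤ × ℤ // 0 ≤ ξ.1 + ξ.2}

/-- The kernel `(ξ, η) ↦ ŝ (ξ* + η)` on `N₊`, whose positive semidefiniteness is that of `ŝ`. -/
def nPlusKernel (shat : ℤ × ℤ → ℂ) : Matrix NPlus NPlus ℂ :=
  of fun ξ η => shat (ξ.1.swap + η.1)

theorem nPlusKernel_posSemidef_iff {shat : ℤ × ℤ → ℂ} :
    (nPlusKernel shat).PosSemidef ↔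
      ∀ (r : ℕ) (ξ : Fin r → ℤ × ℤ), (∀ i, 0 ≤ (ξ i).1 + (ξ i).2) → ∀ c : Fin r → ℂ,
        (∑ i, ∑ j, c i * starRingEnd ℂ (c j) * shat ((ξ i).swap + ξ j)).im = 0 ∧
        0 ≤ (∑ i, ∑ j, c i * starRingEnd ℂ (c j) * shat ((ξ i).swap + ξ j)).re := by
  have hnonneg (w : ℂ) : w.im = 0 ∧ 0 ≤ w.re ↔ 0 ≤ w := by
    rw [Complex.nonneg_iff, and_comm, eq_comm]
  simp only [hnonneg]
  exact ⟨fun h _ ξ hξ c => sum_sum_mul_nonneg_of_posSemidef h (fun i => (⟨ξ i, hξ i⟩ : NPlus)) c,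
    fun h => posSemidef_of_sum_sum_mul_nonneg fun _ ξ c => h _ (fun i => ξ i) (fun i => (ξ i).2) c⟩

/-- The kernel `(x, y) ↦ M (x* + y)` of a double sequence `M` on the `*`-semigroup `ℕ × ℤ` with the
involution `(r, k)* = (r, -k)`; it governs the moments `∫ t ^ r * w ^ k` over `ℝ × Circle`. -/
def polarKernel (M : ℕ → ℤ → ℂ) : Matrix (ℕ × ℤ) (ℕ × ℤ) ℂ :=
  of fun x y => M (x.1 + y.1) (y.2 - x.2)

theorem polar_monomial {w : ℂ} (hw : ‖w‖ = 1) (t : ℝ) (m n : ℕ) :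
    (t * w) ^ m * starRingEnd ℂ (t * w) ^ n = (t : ℂ) ^ (m + n) * w ^ (m - n : ℤ) := by
  have hw0 : w ≠ 0 := norm_ne_zero_iff.mp (hw ▸ one_ne_zero)
  rw [map_mul, Complex.conj_ofReal, ← Complex.inv_eq_conj hw, zpow_sub₀ hw0, zpow_natCast,
    zpow_natCast, mul_pow, mul_pow, inv_pow]
  ring

/-- The substitution `r = m + n`, `k = m - n` makes `N₊` the sub-`*`-semigroup of `ℕ × ℤ` of the
pairs of equal parity; `polarExtension` extends a function on `N₊` by zero to all of `ℕ × ℤ`. -/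
def polarExtension (shat : ℤ × ℤ → ℂ) (r : ℕ) (k : ℤ) : ℂ :=
  if 2 ∣ r + k then shat ((r + k) / 2, r - (r + k) / 2) else 0

theorem polarExtension_add_sub (shat : ℤ × ℤ → ℂ) (m n : ℕ) :
    polarExtension shat (m + n) (m - n) = shat (m, n) := by
  have hsum : ((m + n : ℕ) : ℤ) + (m - n) = 2 * m := by push_cast; ring
  rw [polarExtension, hsum, if_pos (dvd_mul_right _ _), Int.mul_ediv_cancel_left _ two_ne_zero]
  simp

/-- Rounding in `ℕ × ℤ` to a pair of equal parity, read in the coordinates of `N₊`. -/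
def halfSum (x : ℕ × ℤ) : NPlus :=
  ⟨((x.1 + x.2) / 2, x.1 - (x.1 + x.2) / 2), by simp⟩

theorem polarKernel_polarExtension (shat : ℤ × ℤ → ℂ) :
    polarKernel (polarExtension shat) = (nPlusKernel shat).submatrix halfSum halfSum ⊙
      (1 : Matrix (ZMod 2) (ZMod 2) ℂ).submatrix (fun x => x.1 + x.2) fun x => x.1 + x.2 := by
  ext x y
  have hparity : 2 ∣ ((x.1 + y.1 : ℕ) : ℤ) + (y.2 - x.2) ↔
      ((x.1 + x.2 : ZMod 2) = y.1 + y.2) := by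
    rw [← Int.cast_natCast x.1, ← Int.cast_natCast y.1, ← Int.cast_add, ← Int.cast_add,
      ZMod.intCast_eq_intCast_iff_dvd_sub]
    omega
  simp only [polarKernel, polarExtension, nPlusKernel, halfSum, of_apply, hadamard_apply,
    submatrix_apply, one_apply, mul_ite, mul_one, mul_zero, Prod.swap_prod_mk, Prod.mk_add_mk]
  by_cases h : 2 ∣ ((x.1 + y.1 : ℕ) : ℤ) + (y.2 - x.2)
  · rw [if_pos h, if_pos (hparity.mp h)]
    congr 2 <;> omega
  · rw [if_neg h, if_neg (mt hparity.mpr h)]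

theorem polarKernel_polarExtension_posSemidef {shat : ℤ × ℤ → ℂ}
    (hs : (nPlusKernel shat).PosSemidef) : (polarKernel (polarExtension shat)).PosSemidef := by
  rw [polarKernel_polarExtension]
  exact (hs.submatrix _).hadamard (PosSemidef.one.submatrix _)

end PolarKernel

section Fejer

open Finset Filter Topology
open scoped ComplexOrder

/-- The sum `∑ |k| < N, (N - |k|) * g k * w ^ (-k)`, that is, `N` times the `N`-th Fejér mean of
the Fourier series with coefficients `g`, written as a sum over the square `[0, N) × [0, N)`. -/
noncomputable def fejerSum (g : ℤ → ℂ) (N : ℕ) (w : ℂ) : ℂ :=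
  ∑ x ∈ range N ×ˢ range N, w ^ (x.1 - x.2 : ℤ) * g (x.2 - x.1)

theorem hankelMatrix_fejerSum_posSemidef {M : ℕ → ℤ → ℂ} (hM : (polarKernel M).PosSemidef)
    (N : ℕ) {w : ℂ} (hw : ‖w‖ = 1) :
    (hankelMatrix fun r => fejerSum (M r) N w).PosSemidef := by
  have hw0 : w ≠ 0 := norm_ne_zero_iff.mp (hw ▸ one_ne_zero)
  refine posSemidef_of_sum_sum_mul_nonneg fun d ξ c => ?_
  have h := sum_sum_mul_nonneg_of_posSemidef hM (fun x : Fin d × Fin N => (ξ x.1, (x.2 : ℤ)))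
    fun x => c x.1 * w ^ (x.2 : ℤ)
  simp only [Fintype.sum_prod_type] at h
  refine h.trans_eq (sum_congr rfl fun i _ => ?_)
  rw [sum_comm]
  refine sum_congr rfl fun j _ => ?_
  rw [hankelMatrix, Matrix.of_apply, fejerSum, sum_product, sum_range, mul_sum]
  refine sum_congr rfl fun p _ => ?_
  rw [sum_range, mul_sum]
  refine sum_congr rfl fun q _ => ?_
  rw [polarKernel, Matrix.of_apply, map_mul, map_zpow₀, ← Complex.inv_eq_conj hw, inv_zpow,
    zpow_sub₀ hw0]
  ring

theorem sum_zmod_stdAddChar_zpow (n : ℕ) [NeZero n] (k : ℤ) :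
    ∑ x : ZMod n, (ZMod.stdAddChar x : ℂ) ^ k = if (n : ℤ) ∣ k then (n : ℂ) else 0 := by
  have h := AddChar.sum_mulShift (k : ZMod n) (ZMod.isPrimitive_stdAddChar n)
  simpa [← AddChar.map_zsmul_eq_zpow, mul_comm, ZMod.intCast_zmod_eq_zero_iff_dvd] using h

theorem card_filter_range_product_sub_eq (N : ℕ) (d : ℤ) :
    #{x ∈ range N ×ˢ range N | (x.2 : ℤ) - x.1 = d} = N - d.natAbs := by
  rw [← card_range (N - d.natAbs)]
  refine card_nbij' (fun x => min x.1 x.2) (fun i => (i + (-d).toNat, i + d.toNat)) ?_ ?_ ?_ ?_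
  all_goals
    simp only [Set.MapsTo, Set.LeftInvOn, coe_filter, coe_range, mem_product, mem_range,
      Set.mem_ofPred_eq, Set.mem_Iio, Prod.forall, Prod.mk.injEq]
    omega

theorem sum_fejerSum_mul_zpow {N n : ℕ} [NeZero n] (g : ℤ → ℂ) {k : ℤ} (hn : N + k.natAbs ≤ n) :
    ∑ x : ZMod n, fejerSum g N (ZMod.stdAddChar x) * (ZMod.stdAddChar x : ℂ) ^ k =
      n * ((N - k.natAbs : ℕ) * g k) := by
  have hterm {p : ℕ × ℕ} (hp : p ∈ range N ×ˢ range N) :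
      ∑ x : ZMod n, (ZMod.stdAddChar x : ℂ) ^ (p.1 - p.2 : ℤ) * g (p.2 - p.1) *
        (ZMod.stdAddChar x : ℂ) ^ k = if (p.2 : ℤ) - p.1 = k then n * g k else 0 := by
    have hdvd : (n : ℤ) ∣ p.1 - p.2 + k ↔ (p.2 : ℤ) - p.1 = k := by
      simp only [mem_product, mem_range] at hp
      have hlt : |(p.1 - p.2 + k : ℤ)| < n := abs_lt.mpr ⟨by omega, by omega⟩
      refine ⟨fun h => ?_, fun h => ⟨0, by omega⟩⟩
      have := Int.eq_zero_of_abs_lt_dvd h hlt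
      omega
    calc _ = (∑ x : ZMod n, (ZMod.stdAddChar x : ℂ) ^ (p.1 - p.2 + k : ℤ)) * g (p.2 - p.1) := by
          rw [sum_mul]
          refine sum_congr rfl fun x _ => ?_
          rw [zpow_add₀ (AddChar.val_isUnit _ _).ne_zero, mul_right_comm]
      _ = _ := by
          rw [sum_zmod_stdAddChar_zpow, ite_mul, zero_mul]
          exact ite_congr (propext hdvd) (fun h => by rw [h]) fun _ => rfl
  simp only [fejerSum, sum_mul]
  rw [sum_comm, sum_congr rfl fun p hp => hterm hp, ← sum_filter, sum_const,
    card_filter_range_product_sub_eq, nsmul_eq_mul]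
  ring

section Positivity

variable {M : ℕ → ℤ → ℂ} {ι : Type*} {s : Finset ι} {a : ι → ℂ} {r : ι → ℕ} {k : ι → ℤ}

theorem sum_fejer_weight_mul_re_nonneg (hM : (polarKernel M).PosSemidef)
    (ha : ∀ (t : ℝ) (w : ℂ), ‖w‖ = 1 → 0 ≤ (∑ x ∈ s, a x * w ^ k x * (t : ℂ) ^ r x).re) (N : ℕ) :
    0 ≤ ∑ x ∈ s, (N - (k x).natAbs : ℕ) * (a x * M (r x) (k x)).re := by
  let n := N + s.sup (fun x => (k x).natAbs) + 1
  have hn {x : ι} (hx : x ∈ s) : N + (k x).natAbs ≤ n := by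
    have : (k x).natAbs ≤ s.sup fun x => (k x).natAbs := le_sup (f := fun x => (k x).natAbs) hx
    omega
  have hslice (y : ZMod n) :
      0 ≤ (∑ x ∈ s, a x * (ZMod.stdAddChar y : ℂ) ^ k x *
        fejerSum (M (r x)) N (ZMod.stdAddChar y)).re := by
    have hy : ‖(ZMod.stdAddChar y : ℂ)‖ = 1 := AddChar.norm_apply _ _
    exact re_sum_mul_nonneg_of_hankelMatrix_posSemidef (hankelMatrix_fejerSum_posSemidef hM N hy)
      fun t => ha t _ hy
  have hsum : ∑ y : ZMod n, ∑ x ∈ s, a x * (ZMod.stdAddChar y : ℂ) ^ k x *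
        fejerSum (M (r x)) N (ZMod.stdAddChar y) =
      (n : ℝ) * ∑ x ∈ s, ((N - (k x).natAbs : ℕ) : ℝ) * (a x * M (r x) (k x)) := by
    rw [sum_comm, mul_sum]
    refine sum_congr rfl fun x hx => ?_
    simp only [mul_assoc, mul_comm ((ZMod.stdAddChar _ : ℂ) ^ k x), ← mul_sum,
      sum_fejerSum_mul_zpow _ (hn hx)]
    push_cast
    ring
  refine nonneg_of_mul_nonneg_right (a := (n : ℝ)) ?_ (by positivity)
  calc 0 ≤ ∑ y : ZMod n, (∑ x ∈ s, a x * (ZMod.stdAddChar y : ℂ) ^ k x *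
        fejerSum (M (r x)) N (ZMod.stdAddChar y)).re := sum_nonneg fun y _ => hslice y
    _ = n * ∑ x ∈ s, (N - (k x).natAbs : ℕ) * (a x * M (r x) (k x)).re := by
      rw [← Complex.re_sum, hsum, Complex.re_ofReal_mul, Complex.re_sum]
      simp only [Complex.re_ofReal_mul]

theorem tendsto_fejer_weight (d : ℕ) :
    Tendsto (fun N : ℕ => ((N - d : ℕ) : ℝ) / N) atTop (𝓝 1) := by
  have hlim : Tendsto (fun N : ℕ => 1 - (d : ℝ) / N) atTop (𝓝 (1 - 0)) :=
    tendsto_const_nhds.sub (tendsto_const_div_atTop_nhds_zero_nat _)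
  rw [sub_zero] at hlim
  refine hlim.congr' ?_
  filter_upwards [eventually_ge_atTop (d + 1)] with N hN
  have hN0 : (N : ℝ) ≠ 0 := by norm_cast; omega
  rw [Nat.cast_sub (by omega), sub_div, div_self hN0]

theorem re_sum_mul_nonneg_of_polarKernel_posSemidef (hM : (polarKernel M).PosSemidef)
    (ha : ∀ (t : ℝ) (w : ℂ), ‖w‖ = 1 → 0 ≤ (∑ x ∈ s, a x * w ^ k x * (t : ℂ) ^ r x).re) :
    0 ≤ (∑ x ∈ s, a x * M (r x) (k x)).re := by
  have hlim : Tendsto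
      (fun N : ℕ => ∑ x ∈ s, ((N - (k x).natAbs : ℕ) : ℝ) / N * (a x * M (r x) (k x)).re)
      atTop (𝓝 (∑ x ∈ s, 1 * (a x * M (r x) (k x)).re)) :=
    tendsto_finsetSum _ fun x _ => (tendsto_fejer_weight _).mul_const _
  simp only [one_mul, ← Complex.re_sum] at hlim
  refine ge_of_tendsto' hlim fun N => ?_
  simp only [div_mul_eq_mul_div, ← sum_div]
  exact div_nonneg (sum_fejer_weight_mul_re_nonneg hM ha N) N.cast_nonneg

end Positivity

theorem re_sum_mul_nonneg_of_nPlusKernel_posSemidef {shat : ℤ × ℤ → ℂ}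
    (hs : (nPlusKernel shat).PosSemidef) {a : ℕ × ℕ →₀ ℂ}
    (ha : ∀ z : ℂ, 0 ≤ (a.sum fun mn c => c * (z ^ mn.1 * starRingEnd ℂ z ^ mn.2)).re) :
    0 ≤ (a.sum fun mn c => c * shat (mn.1, mn.2)).re := by
  have h := re_sum_mul_nonneg_of_polarKernel_posSemidef (s := a.support) (a := a)
    (r := fun mn : ℕ × ℕ => mn.1 + mn.2) (k := fun mn => mn.1 - mn.2)
    (polarKernel_polarExtension_posSemidef hs) fun t w hw => by
      simpa only [Finsupp.sum, polar_monomial hw, mul_assoc, mul_comm ((t : ℂ) ^ _)]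
        using ha (t * w)
  simpa only [Finsupp.sum, polarExtension_add_sub] using h

end Fejer

section RepresentingMeasure

open MeasureTheory Filter Topology Set Asymptotics
open scoped CompactlySupported

variable {X V : Type*} [TopologicalSpace X] [AddCommGroup V] [Module ℝ V]

theorem exists_nonneg_extension_compactlySupported {T : V →ₗ[ℝ] C(X, ℝ)} {L : V →ₗ[ℝ] ℝ}
    (hone : ∃ e, T e = 1) (hL : ∀ v, 0 ≤ T v → 0 ≤ L v) :
    ∃ Λ : C_c(X, ℝ) →ₗ[ℝ] ℝ,
      ∀ (v : V) (f : C_c(X, ℝ)), (∀ x, 0 ≤ T v x + f x) → 0 ≤ L v + Λ f := by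
  obtain ⟨e, he⟩ := hone
  let ev : C_c(X, ℝ) →ₗ[ℝ] C(X, ℝ) :=
    { toFun := fun f => f.toContinuousMap
      map_add' := fun _ _ => rfl
      map_smul' := fun _ _ => rfl }
  let cone : PointedCone ℝ (V × C_c(X, ℝ)) := (PointedCone.positive ℝ C(X, ℝ)).comap (T.coprod ev)
  have mem_cone {v f} : (v, f) ∈ cone ↔ ∀ x, 0 ≤ T v x + f x := Iff.rfl
  let L₀ : V × C_c(X, ℝ) →ₗ.[ℝ] ℝ :=
    ⟨Submodule.prod ⊤ ⊥, (L ∘ₗ LinearMap.fst ℝ V C_c(X, ℝ)).domRestrict _⟩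
  have hL₀ : ∀ v : L₀.domain, (v : V × C_c(X, ℝ)) ∈ cone → 0 ≤ L₀ v := by
    rintro ⟨⟨v, f⟩, hvf⟩ hv
    obtain rfl : f = 0 := hvf.2
    exact hL v fun x => by simpa using mem_cone.mp hv x
  have hdense : ∀ y, ∃ v : L₀.domain, (v : V × C_c(X, ℝ)) + y ∈ cone := by
    rintro ⟨v, f⟩
    obtain ⟨B, hB⟩ := f.continuous.bounded_above_of_compact_support f.hasCompactSupport
    refine ⟨⟨(-v + B • e, 0), trivial, rfl⟩, mem_cone.mpr fun x => ?_⟩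
    simpa [he, neg_le_iff_add_nonneg'] using neg_le_of_abs_le (hB x)
  obtain ⟨Λ, hΛ_ext, hΛ_nonneg⟩ := riesz_extension cone L₀ hL₀ hdense
  refine ⟨Λ ∘ₗ LinearMap.inr ℝ V C_c(X, ℝ), fun v f hvf => ?_⟩
  have hΛv : Λ (v, 0) = L v := hΛ_ext ⟨(v, 0), trivial, rfl⟩
  calc 0 ≤ Λ (v, f) := hΛ_nonneg _ (mem_cone.mpr hvf)
    _ = Λ (v, 0) + Λ (0, f) := by rw [← map_add, Prod.mk_add_mk, add_zero, zero_add]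
    _ = L v + (Λ ∘ₗ LinearMap.inr ℝ V C_c(X, ℝ)) f := by rw [hΛv]; rfl

theorem exists_cutoff_eqOn_one [T2Space X] [LocallyCompactSpace X] {K : Set X} (hK : IsCompact K) :
    ∃ χ : C_c(X, ℝ), EqOn χ 1 K ∧ ∀ x, χ x ∈ Icc (0 : ℝ) 1 := by
  obtain ⟨χ, hχK, -, hχ_supp, hχ⟩ :=
    exists_continuous_one_zero_of_isCompact hK isClosed_empty (disjoint_empty K)
  exact ⟨⟨χ, hχ_supp⟩, hχK, hχ⟩

theorem exists_cutoff_abs_smul_sub_le [T2Space X] [LocallyCompactSpace X] {f g : C(X, ℝ)}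
    (hg : 0 ≤ g) (hfg : f =o[cocompact X] g) {ε : ℝ} (hε : 0 < ε) :
    ∃ χ : C_c(X, ℝ), ∀ x, |(f • χ) x - f x| ≤ ε * g x := by
  obtain ⟨K, hK, hKε⟩ := mem_cocompact.mp (hfg.def hε)
  obtain ⟨χ, hχ_one, hχ⟩ := exists_cutoff_eqOn_one hK
  refine ⟨χ, fun x => ?_⟩
  by_cases hx : x ∈ K
  · simpa [hχ_one hx] using mul_nonneg hε.le (hg x)
  · have hgx : |g x| = g x := abs_of_nonneg (hg x)
    calc |(f • χ) x - f x| = (1 - χ x) * |f x| := by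
          rw [← abs_of_nonneg (sub_nonneg.mpr (hχ x).2), ← abs_mul, ← abs_neg,
            CompactlySupportedContinuousMap.smulc_apply, smul_eq_mul]
          ring_nf
      _ ≤ |f x| := mul_le_of_le_one_left (abs_nonneg _) (by linarith [(hχ x).1])
      _ ≤ ε * g x := by simpa [hgx] using hKε hx

variable [T2Space X] [LocallyCompactSpace X] [MeasurableSpace X] [BorelSpace X]

theorem integrable_of_forall_integral_cutoff_le [SigmaCompactSpace X] {μ : Measure X}
    [IsFiniteMeasureOnCompacts μ] {g : C(X, ℝ)} (hg : 0 ≤ g) {B : ℝ}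
    (hB : ∀ χ : C_c(X, ℝ), (∀ x, χ x ∈ Icc (0 : ℝ) 1) → ∫ x, (g • χ) x ∂μ ≤ B) :
    Integrable g μ := by
  have hcover : AECover μ atTop (compactCovering X) :=
    { ae_eventually_mem := .of_forall fun x => by
        obtain ⟨n, hn⟩ := exists_mem_compactCovering x
        exact (eventually_ge_atTop n).mono fun m hm => compactCovering_subset X hm hn
      measurableSet := fun n => (isCompact_compactCovering X n).measurableSet }
  refine hcover.integrable_of_integral_bounded_of_nonneg_ae B
    (fun n => g.continuous.continuousOn.integrableOn_compact (isCompact_compactCovering X n))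
    (.of_forall hg) (.of_forall fun n => ?_)
  have hKn := isCompact_compactCovering X n
  obtain ⟨χ, hχ_one, hχ⟩ := exists_cutoff_eqOn_one hKn
  calc ∫ x in compactCovering X n, g x ∂μ
      = ∫ x in compactCovering X n, (g • χ) x ∂μ :=
        setIntegral_congr_fun hKn.measurableSet fun x hx => by simp [hχ_one hx]
    _ ≤ ∫ x, (g • χ) x ∂μ :=
        setIntegral_le_integral ((g • χ).continuous.integrable_of_hasCompactSupport
          (g • χ).hasCompactSupport) (.of_forall fun x => mul_nonneg (hg x) (hχ x).1)
    _ ≤ B := hB χ hχ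

theorem le_integral_of_isLittleO {T : V →ₗ[ℝ] C(X, ℝ)} {L : V →ₗ[ℝ] ℝ} {μ : Measure X}
    [IsFiniteMeasureOnCompacts μ]
    (hμ : ∀ (v : V) (f : C_c(X, ℝ)), (∀ x, 0 ≤ T v x + f x) → 0 ≤ L v + ∫ x, f x ∂μ)
    {v w : V} (hv : Integrable (T v) μ) (hw : Integrable (T w) μ) (hw_nonneg : 0 ≤ T w)
    (hvw : T v =o[cocompact X] T w) : L v ≤ ∫ x, T v x ∂μ := by
  suffices hε : ∀ ε > 0, L v ≤ ∫ x, T v x ∂μ + ε * (L w + ∫ x, T w x ∂μ) by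
    have hlim : Tendsto (fun ε : ℝ => ∫ x, T v x ∂μ + ε * (L w + ∫ x, T w x ∂μ)) (𝓝[>] 0)
        (𝓝 (∫ x, T v x ∂μ + 0 * (L w + ∫ x, T w x ∂μ))) :=
      (Continuous.tendsto (by fun_prop) 0).mono_left nhdsWithin_le_nhds
    simpa using ge_of_tendsto hlim (eventually_mem_nhdsWithin.mono hε)
  intro ε hε
  obtain ⟨χ, hclose⟩ := exists_cutoff_abs_smul_sub_le hw_nonneg hvw hε
  have hL_le : L v ≤ ε * L w + ∫ x, (T v • χ) x ∂μ := by
    have h := hμ (ε • w - v) (T v • χ) fun x => by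
      have := (abs_le.mp (hclose x)).1
      simp only [map_sub, map_smul, ContinuousMap.sub_apply, ContinuousMap.smul_apply, smul_eq_mul]
      linarith
    simp only [map_sub, map_smul, smul_eq_mul] at h
    linarith
  have hint_le : ∫ x, (T v • χ) x ∂μ ≤ ∫ x, T v x ∂μ + ε * ∫ x, T w x ∂μ := by
    rw [← integral_const_mul, ← integral_add hv (hw.const_mul ε)]
    refine integral_mono ((T v • χ).continuous.integrable_of_hasCompactSupport
      (T v • χ).hasCompactSupport) (hv.add (hw.const_mul ε)) fun x => ?_
    linarith [(abs_le.mp (hclose x)).2]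
  linarith

theorem exists_measure_integral_eq_of_nonneg [SecondCountableTopology X] {T : V →ₗ[ℝ] C(X, ℝ)}
    {L : V →ₗ[ℝ] ℝ} (hone : ∃ e, T e = 1) (hL : ∀ v, 0 ≤ T v → 0 ≤ L v) :
    ∃ μ : Measure X, ∀ v w, 0 ≤ T w → T v =o[cocompact X] T w →
      Integrable (T v) μ ∧ ∫ x, T v x ∂μ = L v := by
  obtain ⟨Λ, hΛ⟩ := exists_nonneg_extension_compactlySupported hone hL
  let Λ_pos : C_c(X, ℝ) →ₚ[ℝ] ℝ :=
    PositiveLinearMap.mk₀ Λ fun f hf => by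
      simpa using hΛ 0 f fun x => by simpa using hf x
  let μ := RealRMK.rieszMeasure Λ_pos
  have hμ (v : V) (f : C_c(X, ℝ)) (hvf : ∀ x, 0 ≤ T v x + f x) : 0 ≤ L v + ∫ x, f x ∂μ :=
    (RealRMK.integral_rieszMeasure Λ_pos f).symm ▸ hΛ v f hvf
  have hint {w : V} (hw : 0 ≤ T w) : Integrable (T w) μ := by
    refine integrable_of_forall_integral_cutoff_le hw (B := L w) fun χ hχ => ?_
    have h := hμ w (-(T w • χ)) fun x => by
      simpa using mul_le_of_le_one_right (hw x) (hχ x).2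
    simpa [integral_neg] using h
  refine ⟨μ, fun v w hw hvw => ?_⟩
  have hv : Integrable (T v) μ :=
    (T v).continuous.locallyIntegrable.integrable_of_isBigO_cocompact hvw.isBigO
      ((hint hw).integrableAtFilter _)
  refine ⟨hv, le_antisymm ?_ (le_integral_of_isLittleO hμ hv (hint hw) hw hvw)⟩
  have h := le_integral_of_isLittleO (v := -v) hμ (by simpa using hv.neg) (hint hw) hw
    (by rw [map_neg]; exact hvw.neg_left)
  simpa [integral_neg] using h

theorem exists_measure_integral_eq_of_re_nonneg [SecondCountableTopology X] {ι : Type*}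
    {φ : ι → C(X, ℂ)} {s : ι → ℂ} (hone : ∃ a : ι →₀ ℂ, ∀ x, (a.sum fun i c => c * φ i x).re = 1)
    (hs : ∀ a : ι →₀ ℂ, (∀ x, 0 ≤ (a.sum fun i c => c * φ i x).re) →
      0 ≤ (a.sum fun i c => c * s i).re) :
    ∃ μ : Measure X, ∀ (i : ι) (b : ι →₀ ℂ), (∀ x, 0 ≤ (b.sum fun j c => c * φ j x).re) →
      (φ i =o[cocompact X] fun x => (b.sum fun j c => c * φ j x).re) →
      Integrable (φ i) μ ∧ s i = ∫ x, φ i x ∂μ := by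
  let reMap : C(X, ℂ) →ₗ[ℝ] C(X, ℝ) := Complex.reCLM.compLeftContinuous ℝ X
  let T : (ι →₀ ℂ) →ₗ[ℝ] C(X, ℝ) := reMap ∘ₗ (Finsupp.linearCombination ℂ φ).restrictScalars ℝ
  let L : (ι →₀ ℂ) →ₗ[ℝ] ℝ :=
    Complex.reLm ∘ₗ (Finsupp.linearCombination ℂ s).restrictScalars ℝ
  have hT (a x) : T a x = (a.sum fun i c => c * φ i x).re := by
    simp [T, reMap, Finsupp.linearCombination_apply, Finsupp.sum]
  have hL (a) : L a = (a.sum fun i c => c * s i).re := by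
    simp [L, Finsupp.linearCombination_apply]
  obtain ⟨μ, hμ⟩ := exists_measure_integral_eq_of_nonneg (T := T) (L := L)
    (hone.imp fun a ha => ContinuousMap.ext fun x => (hT a x).trans (ha x))
    fun a ha => hL a ▸ hs a fun x => hT a x ▸ ha x
  refine ⟨μ, fun i b hb hib => ?_⟩
  have hb_nonneg : 0 ≤ T b := fun x => (hb x).trans_eq (hT b x).symm
  have hib_T : φ i =o[cocompact X] T b := by simpa only [funext (hT b)] using hib
  have hT_re : ⇑(T (.single i 1)) = fun x => (φ i x).re := by
    ext x
    simp [hT]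
  have hT_im : ⇑(T (.single i (-Complex.I))) = fun x => (φ i x).im := by
    ext x
    simp [hT]
  obtain ⟨hre_int, hre⟩ := hμ (.single i 1) b hb_nonneg <|
    hT_re ▸ (isBigO_of_le _ fun x => Complex.abs_re_le_norm _).trans_isLittleO hib_T
  obtain ⟨him_int, him⟩ := hμ (.single i (-Complex.I)) b hb_nonneg <|
    hT_im ▸ (isBigO_of_le _ fun x => Complex.abs_im_le_norm _).trans_isLittleO hib_T
  rw [hT_re] at hre_int hre
  rw [hT_im] at him_int him
  have hint : Integrable (φ i) μ := Integrable.re_im_iff.mp ⟨hre_int, him_int⟩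
  refine ⟨hint, Complex.ext ?_ ?_⟩
  · calc (s i).re = ∫ x, (φ i x).re ∂μ := by simp [hre, hL]
      _ = (∫ x, φ i x ∂μ).re := integral_re hint
  · calc (s i).im = ∫ x, (φ i x).im ∂μ := by
          rw [him, hL, Finsupp.sum_single_index (by simp)]
          simp
      _ = (∫ x, φ i x ∂μ).im := integral_im hint

theorem exists_measure_complex_moments {s : ℕ × ℕ → ℂ}
    (hs : ∀ a : ℕ × ℕ →₀ ℂ,
      (∀ z : ℂ, 0 ≤ (a.sum fun mn c => c * (z ^ mn.1 * (starRingEnd ℂ z) ^ mn.2)).re) →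
      0 ≤ (a.sum fun mn c => c * s mn).re) :
    ∃ μ : Measure ℂ, ∀ mn : ℕ × ℕ,
      Integrable (fun z : ℂ => z ^ mn.1 * (starRingEnd ℂ z) ^ mn.2) μ ∧
        s mn = ∫ z : ℂ, z ^ mn.1 * (starRingEnd ℂ z) ^ mn.2 ∂μ := by
  let φ (mn : ℕ × ℕ) : C(ℂ, ℂ) := ⟨fun z => z ^ mn.1 * (starRingEnd ℂ z) ^ mn.2, by fun_prop⟩
  obtain ⟨μ, hμ⟩ := exists_measure_integral_eq_of_re_nonneg (φ := φ) (s := s)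
    ⟨.single (0, 0) 1, fun z => by simp [φ]⟩ hs
  refine ⟨μ, fun ⟨m, n⟩ => ?_⟩
  let K := m + n + 1
  have hdom (z : ℂ) :
      ((Finsupp.single (K, K) 1).sum fun mn (c : ℂ) => c * φ mn z).re = ‖z‖ ^ (2 * K) := by
    rw [Finsupp.sum_single_index (by simp), one_mul, ContinuousMap.coe_mk, ← mul_pow,
      Complex.mul_conj', ← pow_mul]
    exact_mod_cast Complex.ofReal_re (‖z‖ ^ (2 * K))
  refine hμ (m, n) (.single (K, K) 1) (fun z => ?_) ?_
  · rw [hdom]; positivity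
  · simp only [hdom]
    have hpow : (fun t : ℝ => t ^ (m + n)) =o[atTop] fun t => t ^ (2 * K) :=
      isLittleO_pow_pow_atTop_of_lt (by omega)
    refine IsLittleO.of_norm_left ?_
    simpa [φ, pow_add, Function.comp_def] using
      hpow.comp_tendsto (tendsto_norm_cocompact_atTop (E := ℂ))

end RepresentingMeasure

section Characters

open MeasureTheory
open scoped ComplexOrder

/-- The character `ξ ↦ z ^ ξ.1 * conj z ^ ξ.2` of the `*`-semigroup `N₊` defined by a point `z` of
the plane, in polar form: at `z = 0`, where negative exponents make no sense, it takes the value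
`arg 0 = 0` for the angle, so that it is `1` on `{ξ | ξ.1 + ξ.2 = 0}` and `0` elsewhere. -/
noncomputable def planeChar (ξ : ℤ × ℤ) (z : ℂ) : ℂ :=
  ‖z‖ ^ (ξ.1 + ξ.2).toNat * Complex.exp (z.arg * Complex.I) ^ (ξ.1 - ξ.2)

theorem planeChar_natCast (m n : ℕ) (z : ℂ) :
    planeChar (m, n) z = z ^ m * starRingEnd ℂ z ^ n := by
  conv_rhs => rw [← Complex.norm_mul_exp_arg_mul_I z]
  rw [polar_monomial (Complex.norm_exp_ofReal_mul_I _), planeChar, ← Nat.cast_add,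
    Int.toNat_natCast]

theorem planeChar_swap_add {ξ η : ℤ × ℤ} (hξ : 0 ≤ ξ.1 + ξ.2) (hη : 0 ≤ η.1 + η.2) (z : ℂ) :
    planeChar (ξ.swap + η) z = starRingEnd ℂ (planeChar ξ z) * planeChar η z := by
  have hw : ‖Complex.exp (z.arg * Complex.I)‖ = 1 := Complex.norm_exp_ofReal_mul_I _
  have hdeg : ((ξ.swap + η).1 + (ξ.swap + η).2).toNat = (ξ.1 + ξ.2).toNat + (η.1 + η.2).toNat := by
    rw [← Int.toNat_add hξ hη]
    congr 1
    simp only [Prod.fst_add, Prod.snd_add, Prod.fst_swap, Prod.snd_swap]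
    ring
  have hang : (ξ.swap + η).1 - (ξ.swap + η).2 = -(ξ.1 - ξ.2) + (η.1 - η.2) := by
    simp only [Prod.fst_add, Prod.snd_add, Prod.fst_swap, Prod.snd_swap]
    ring
  simp only [planeChar]
  rw [hdeg, hang, zpow_add₀ (Complex.exp_ne_zero _), zpow_neg, ← inv_zpow, Complex.inv_eq_conj hw,
    pow_add, map_mul, map_pow, map_zpow₀, Complex.conj_ofReal]
  ring

theorem norm_planeChar (ξ : ℤ × ℤ) (z : ℂ) : ‖planeChar ξ z‖ = ‖z‖ ^ (ξ.1 + ξ.2).toNat := by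
  simp [planeChar, Complex.norm_exp_ofReal_mul_I]

theorem measurable_planeChar (ξ : ℤ × ℤ) : Measurable (planeChar ξ) := by
  unfold planeChar
  fun_prop

theorem integrable_planeChar {μ : Measure ℂ}
    (hμ : ∀ n : ℕ, Integrable (fun z : ℂ => z ^ n) μ) (ξ : ℤ × ℤ) : Integrable (planeChar ξ) μ :=
  (hμ (ξ.1 + ξ.2).toNat).mono (measurable_planeChar ξ).aestronglyMeasurable <|
    .of_forall fun z => by rw [norm_planeChar, norm_pow]

theorem sum_sum_mul_integral_conj_mul_nonneg {X ι : Type*} [MeasurableSpace X] {μ : Measure X}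
    [Fintype ι] {f : ι → X → ℂ}
    (hf : ∀ i j, Integrable (fun x => starRingEnd ℂ (f i x) * f j x) μ) (c : ι → ℂ) :
    0 ≤ ∑ i, ∑ j, c i * starRingEnd ℂ (c j) * ∫ x, starRingEnd ℂ (f i x) * f j x ∂μ := by
  have hsq (x : X) :
      ∑ i, ∑ j, c i * starRingEnd ℂ (c j) * (starRingEnd ℂ (f i x) * f j x) =
        (‖∑ i, starRingEnd ℂ (c i) * f i x‖ ^ 2 : ℝ) := by
    rw [Complex.ofReal_pow, ← Complex.conj_mul', map_sum, Finset.sum_mul_sum]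
    refine Finset.sum_congr rfl fun i _ => Finset.sum_congr rfl fun j _ => ?_
    rw [map_mul, Complex.conj_conj]
    ring
  calc (0 : ℂ) ≤ (∫ x, ‖∑ i, starRingEnd ℂ (c i) * f i x‖ ^ 2 ∂μ : ℝ) := by
        exact_mod_cast integral_nonneg fun x => sq_nonneg _
    _ = ∫ x, ∑ i, ∑ j, c i * starRingEnd ℂ (c j) * (starRingEnd ℂ (f i x) * f j x) ∂μ := by
        simp only [hsq]
        exact integral_ofReal.symm
    _ = ∑ i, ∑ j, c i * starRingEnd ℂ (c j) * ∫ x, starRingEnd ℂ (f i x) * f j x ∂μ := by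
        simp_rw [integral_finsetSum _ fun i _ => integrable_finsetSum _ fun j _ =>
          (hf i j).const_mul (c i * starRingEnd ℂ (c j)),
          integral_finsetSum _ fun j _ => (hf _ j).const_mul _, integral_const_mul]

theorem nPlusKernel_integral_planeChar_posSemidef {μ : Measure ℂ}
    (hμ : ∀ n : ℕ, Integrable (fun z : ℂ => z ^ n) μ) :
    (nPlusKernel fun ξ => ∫ z, planeChar ξ z ∂μ).PosSemidef := by
  refine posSemidef_of_sum_sum_mul_nonneg fun r ξ c => ?_
  simp only [nPlusKernel, Matrix.of_apply, planeChar_swap_add (ξ _).2 (ξ _).2]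
  refine sum_sum_mul_integral_conj_mul_nonneg (fun i j => ?_) c
  exact (integrable_planeChar hμ ((ξ i).1.swap + (ξ j).1)).congr <|
    .of_forall (planeChar_swap_add (ξ i).2 (ξ j).2)

end Characters

/-- **Theorem of Stochel and Szafraniec on the complex moment problem.**
A doubly indexed sequence `s : ℕ × ℕ → ℂ` is a complex moment sequence,
`s(m,n) = ∫ z^m conj(z)^n dμ`, if and only if it extends to a sequence
`ŝ : ℤ × ℤ → ℂ` that is positive semidefinite on the `*`-semigroup
`N₊ = {(m,n) ∈ ℤ² : m + n ≥ 0}` with involution `(m,n)* = (n,m)`. -/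
theorem stochel_szafraniec_complex_moment_problem (s : ℕ × ℕ → ℂ) :
    (∃ μ : MeasureTheory.Measure ℂ,
      ∀ mn : ℕ × ℕ,
        MeasureTheory.Integrable
          (fun z : ℂ => z ^ mn.1 * (starRingEnd ℂ z) ^ mn.2) μ ∧
        s mn = ∫ z : ℂ, z ^ mn.1 * (starRingEnd ℂ z) ^ mn.2 ∂μ) ↔
    ∃ shat : ℤ × ℤ → ℂ,
      (∀ mn : ℕ × ℕ, shat ((mn.1 : ℤ), (mn.2 : ℤ)) = s mn) ∧
      ∀ (r : ℕ) (ξ : Fin r → ℤ × ℤ), (∀ i : Fin r, 0 ≤ (ξ i).1 + (ξ i).2) →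
        ∀ c : Fin r → ℂ,
          (∑ i : Fin r, ∑ j : Fin r,
              c i * starRingEnd ℂ (c j) * shat ((ξ i).swap + ξ j)).im = 0 ∧
          0 ≤ (∑ i : Fin r, ∑ j : Fin r,
              c i * starRingEnd ℂ (c j) * shat ((ξ i).swap + ξ j)).re := by
  simp only [← nPlusKernel_posSemidef_iff]
  constructor
  · rintro ⟨μ, hμ⟩
    refine ⟨fun ξ => ∫ z, planeChar ξ z ∂μ, fun ⟨m, n⟩ => ?_, ?_⟩
    · simp only [planeChar_natCast]
      exact (hμ (m, n)).2.symm
    · exact nPlusKernel_integral_planeChar_posSemidef fun n => by simpa using (hμ (n, 0)).1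
  · rintro ⟨shat, hext, hshat⟩
    refine exists_measure_complex_moments fun a ha => ?_
    simpa only [hext] using re_sum_mul_nonneg_of_nPlusKernel_posSemidef hshat ha
end
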